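/- Nixon–Owen construction of simple (2,1)-tight graphs: define a class C of simple graphs inductively by: K_5 − e ∈ C and K_4 ⊔ K_4 ∈ C (where K_4 ⊔ K_4 is the graph formed by two copies of K_4 sharing exactly one edge and its two endpoints); if G ∈ C then any simple graph obtained from G by a vertex addition, an edge splitting operation, a vertex-to-K_4 operation, or a 2-dimensional vertex splitting operation is in C; and if G₁, G₂ ∈ C then any graph obtained from the disjoint union of G₁ and G₂ by adding a single edge between them is in C. Then a simple graph G is (2,1)-tight if and only if G ∈ C. -/

import Mathlib

open Finset

/-- A finite simple graph given by a finite vertex set of natural numbers and a finite set of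
edges (unordered pairs of distinct vertices). -/
structure FinGraph where
  verts : Finset ℕ
  edges : Finset (Sym2 ℕ)
  not_isDiag : ∀ e ∈ edges, ¬ e.IsDiag
  mem_verts : ∀ e ∈ edges, ∀ v ∈ e, v ∈ verts

/-- Adjacency in a `FinGraph`. -/
def FinGraph.Adj (G : FinGraph) (a b : ℕ) : Prop := s(a, b) ∈ G.edges

/-- `(V', E')` is a subgraph of `G`: the vertices and edges come from `G` and every endpoint
of an edge of `E'` lies in `V'`. -/
def SubgraphPair (G : FinGraph) (V' : Finset ℕ) (E' : Finset (Sym2 ℕ)) : Prop :=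
  V' ⊆ G.verts ∧ E' ⊆ G.edges ∧ ∀ e ∈ E', ∀ v ∈ e, v ∈ V'

/-- Vertex addition: add a new vertex `v` of degree 2 joined to two distinct existing
vertices `a` and `b`. -/
def VertexAddition (G G' : FinGraph) : Prop :=
  ∃ v a b : ℕ, v ∉ G.verts ∧ a ∈ G.verts ∧ b ∈ G.verts ∧ a ≠ b ∧
    G'.verts = insert v G.verts ∧
    G'.edges = insert s(v, a) (insert s(v, b) G.edges)

/-- Edge splitting: remove an edge `xy`, add a new vertex `v` of degree 3 joined to `x`, `y`
and a third existing vertex `z` distinct from `x` and `y`. -/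
def EdgeSplit (G G' : FinGraph) : Prop :=
  ∃ v x y z : ℕ, v ∉ G.verts ∧ x ∈ G.verts ∧ y ∈ G.verts ∧ z ∈ G.verts ∧
    z ≠ x ∧ z ≠ y ∧ s(x, y) ∈ G.edges ∧
    G'.verts = insert v G.verts ∧
    G'.edges = insert s(v, x) (insert s(v, y) (insert s(v, z) (G.edges.erase s(x, y))))

/-- Vertex-to-`K₄`: remove a vertex `v` and all its incident edges, insert four new vertices
`k 0, k 1, k 2, k 3` spanning a copy of `K₄`, and join each former neighbour `w` of `v` to
one vertex `k (f w)` of the new `K₄`. -/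
def VertexToK4 (G G' : FinGraph) : Prop :=
  ∃ (v : ℕ) (k : Fin 4 → ℕ) (f : ℕ → Fin 4),
    v ∈ G.verts ∧ Function.Injective k ∧ (∀ i, k i ∉ G.verts) ∧
    G'.verts = (G.verts.erase v) ∪ {k 0, k 1, k 2, k 3} ∧
    G'.edges = (G.edges.filter (fun e => v ∉ e)) ∪
      {s(k 0, k 1), s(k 0, k 2), s(k 0, k 3), s(k 1, k 2), s(k 1, k 3), s(k 2, k 3)} ∪
      ((G.verts.filter (fun w => s(v, w) ∈ G.edges)).image (fun w => s(w, k (f w))))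

/-- Two-dimensional vertex splitting at `v` with chosen neighbour `u₁`: remove `v` and its
incident edges, add two new vertices `v₀`, `v₁` and the edges `v₀v₁`, `u₁v₀`, `u₁v₁`, and for
each remaining neighbour `w` of `v` add exactly one of the edges `wv₀` or `wv₁` (according
to `σ w`). -/
def VertexSplit (G G' : FinGraph) : Prop :=
  ∃ (v u₁ v₀ v₁ : ℕ) (σ : ℕ → Bool),
    v ∈ G.verts ∧ s(v, u₁) ∈ G.edges ∧
    v₀ ∉ G.verts ∧ v₁ ∉ G.verts ∧ v₀ ≠ v₁ ∧
    G'.verts = insert v₀ (insert v₁ (G.verts.erase v)) ∧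
    G'.edges = (G.edges.filter (fun e => v ∉ e)) ∪
      {s(v₀, v₁), s(u₁, v₀), s(u₁, v₁)} ∪
      ((G.verts.filter (fun w => s(v, w) ∈ G.edges ∧ w ≠ u₁)).image
        (fun w => s(w, if σ w then v₁ else v₀)))

/-- `G` is a copy of `K₅ − e`: the complete graph on five distinct vertices with the edge
`ab` removed. -/
def IsK5MinusE (G : FinGraph) : Prop :=
  ∃ a b c d e : ℕ,
    a ≠ b ∧ a ≠ c ∧ a ≠ d ∧ a ≠ e ∧ b ≠ c ∧ b ≠ d ∧ b ≠ e ∧ c ≠ d ∧ c ≠ e ∧ d ≠ e ∧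
    G.verts = {a, b, c, d, e} ∧
    G.edges = {s(a, c), s(a, d), s(a, e), s(b, c), s(b, d), s(b, e),
               s(c, d), s(c, e), s(d, e)}

/-- `G` is a copy of `K₄ ⊔ K₄`: two copies of `K₄` sharing exactly the edge `ab` and its two
endpoints. -/
def IsK4JoinK4 (G : FinGraph) : Prop :=
  ∃ a b c d e f : ℕ,
    a ≠ b ∧ a ≠ c ∧ a ≠ d ∧ a ≠ e ∧ a ≠ f ∧ b ≠ c ∧ b ≠ d ∧ b ≠ e ∧ b ≠ f ∧
    c ≠ d ∧ c ≠ e ∧ c ≠ f ∧ d ≠ e ∧ d ≠ f ∧ e ≠ f ∧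
    G.verts = {a, b, c, d, e, f} ∧
    G.edges = {s(a, b), s(a, c), s(a, d), s(b, c), s(b, d), s(c, d),
               s(a, e), s(a, f), s(b, e), s(b, f), s(e, f)}

/-- Edge joining: connect the disjoint graphs `G₁` and `G₂` by a single new edge. -/
def EdgeJoin (G₁ G₂ G' : FinGraph) : Prop :=
  ∃ a b : ℕ, Disjoint G₁.verts G₂.verts ∧ a ∈ G₁.verts ∧ b ∈ G₂.verts ∧
    G'.verts = G₁.verts ∪ G₂.verts ∧
    G'.edges = insert s(a, b) (G₁.edges ∪ G₂.edges)

/-- `G` is (2,1)-tight: `|E| = 2|V| − 1` and every subgraph `(V',E')` with `V'` nonempty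
satisfies `|E'| ≤ 2|V'| − 1`. -/
def Tight21 (G : FinGraph) : Prop :=
  (G.edges.card : ℤ) = 2 * G.verts.card - 1 ∧
  ∀ V' E', SubgraphPair G V' E' → V'.Nonempty → (E'.card : ℤ) ≤ 2 * V'.card - 1

/-- The Nixon–Owen class for (2,1)-tight graphs: generated from `K₅ − e` and `K₄ ⊔ K₄` by
vertex additions, edge splits, vertex-to-`K₄` operations, vertex splitting operations, and
edge joins of two graphs in the class. -/
inductive NOClass21 : FinGraph → Prop
  | k5e (G : FinGraph) : IsK5MinusE G → NOClass21 G
  | k4k4 (G : FinGraph) : IsK4JoinK4 G → NOClass21 G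
  | va (G G' : FinGraph) : NOClass21 G → VertexAddition G G' → NOClass21 G'
  | es (G G' : FinGraph) : NOClass21 G → EdgeSplit G G' → NOClass21 G'
  | vk4 (G G' : FinGraph) : NOClass21 G → VertexToK4 G G' → NOClass21 G'
  | vs (G G' : FinGraph) : NOClass21 G → VertexSplit G G' → NOClass21 G'
  | join (G₁ G₂ G' : FinGraph) : NOClass21 G₁ → NOClass21 G₂ → EdgeJoin G₁ G₂ G' →
      NOClass21 G'

/-!
Every move adds exactly twice as many edges as vertices, and an edge join adds the one edge that the
union of two tight graphs lacks, so tightness passes from the smaller graphs to the larger one by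
counting edges. For the converse, consider a tight graph with no inverse move and count degrees. A
minimal tight proper subset sends at least two edges to the rest of the graph, so its vertices have
average degree at least 4, and distinct minimal tight sets are disjoint. A vertex of degree 3
outside all of them has a 4-clique as its closed neighbourhood; two such cliques share at most one
vertex, and since no such clique can be contracted, some vertex outside it has two neighbours in it.
As the edges from that vertex cannot be contracted either, both neighbours have degree at least 5,
and their surplus pays for the vertices of degree 3. Hence `2|E| ≥ 4|V|`, contradicting
`2|E| = 4|V| - 2`.
-/

section Counting

variable {α : Type*}

/-- The number of edges of `G` induced on the vertex set `S`. -/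
def edgeCount [DecidableEq α] (G : SimpleGraph α) [DecidableRel G.Adj] (S : Finset α) : ℕ :=
  #{e ∈ S.sym2 | e ∈ G.edgeSet}

/-- The number of neighbours of `v` in `S`; for `S = V(G)` this is the degree of `v`. -/
def degreeInto (G : SimpleGraph α) [DecidableRel G.Adj] (v : α) (S : Finset α) : ℕ :=
  #{w ∈ S | G.Adj v w}

variable {G H : SimpleGraph α} [DecidableRel G.Adj] [DecidableRel H.Adj] {v : α} {S T : Finset α}

@[simp]
theorem degreeInto_empty : degreeInto G v ∅ = 0 := by
  simp [degreeInto]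

theorem degreeInto_mono (hST : S ⊆ T) : degreeInto G v S ≤ degreeInto G v T :=
  card_le_card (filter_subset_filter _ hST)

theorem degreeInto_le_card : degreeInto G v S ≤ #S :=
  card_filter_le _ _

theorem degreeInto_pos : 0 < degreeInto G v S ↔ ∃ w ∈ S, G.Adj v w := by
  rw [degreeInto, card_pos, filter_nonempty_iff]

theorem degreeInto_eq_zero (h : ∀ w ∈ S, ¬G.Adj v w) : degreeInto G v S = 0 := by
  rw [degreeInto, filter_false_of_mem h, card_empty]

theorem degreeInto_lt_card (hv : v ∈ S) : degreeInto G v S < #S :=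
  card_lt_card (filter_ssubset.2 ⟨v, hv, G.irrefl⟩)

theorem two_le_degreeInto {a b : α} (hab : a ≠ b) (ha : a ∈ S) (hb : b ∈ S) (hva : G.Adj v a)
    (hvb : G.Adj v b) : 2 ≤ degreeInto G v S := by
  classical
  rw [← card_pair hab]
  exact card_le_card (by simp [insert_subset_iff, ha, hb, hva, hvb])

theorem sum_degreeInto (S T : Finset α) : ∑ v ∈ S, degreeInto G v T = #(G.interedges S T) := by
  rw [SimpleGraph.interedges, Rel.interedges, card_filter, sum_product]
  exact sum_congr rfl fun v _ ↦ card_filter _ _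

theorem degreeInto_of_isClique (hS : G.IsClique S) (hv : v ∈ S) : degreeInto G v S = #S - 1 := by
  classical
  have hfilter : {w ∈ S | G.Adj v w} = S.erase v := by
    ext w
    rw [mem_filter, mem_erase]
    exact ⟨fun h ↦ ⟨h.2.ne', h.1⟩, fun h ↦ ⟨h.2, hS hv h.2 h.1.symm⟩⟩
  rw [degreeInto, hfilter, card_erase_of_mem hv]

variable [DecidableEq α]

theorem degreeInto_insert {w : α} (hw : w ∉ S) :
    degreeInto G v (insert w S) = degreeInto G v S + if G.Adj v w then 1 else 0 := by
  rw [degreeInto, filter_insert]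
  split_ifs with h
  · exact card_insert_of_notMem fun hw' ↦ hw (mem_filter.1 hw').1
  · rfl

theorem degreeInto_union (hST : Disjoint S T) :
    degreeInto G v (S ∪ T) = degreeInto G v S + degreeInto G v T := by
  rw [degreeInto, filter_union, card_union_of_disjoint (disjoint_filter_filter hST)]
  rfl

theorem degreeInto_erase_self : degreeInto G v (S.erase v) = degreeInto G v S := by
  rw [degreeInto, degreeInto, filter_erase, erase_eq_of_notMem (by simp)]

theorem edgeCount_congr (h : ∀ a ∈ S, ∀ b ∈ S, G.Adj a b ↔ H.Adj a b) :
    edgeCount G S = edgeCount H S := by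
  refine congrArg card (filter_congr fun e he ↦ ?_)
  induction e using Sym2.ind with
  | _ a b => exact h a (mk_mem_sym2_iff.1 he).1 b (mk_mem_sym2_iff.1 he).2

@[simp]
theorem edgeCount_empty : edgeCount G ∅ = 0 := by
  simp [edgeCount]

theorem edgeCount_insert (hv : v ∉ S) :
    edgeCount G (insert v S) = edgeCount G S + degreeInto G v S := by
  have hdisj : Disjoint (filter (· ∈ G.edgeSet) (image (s(v, ·)) (insert v S)))
      (filter (· ∈ G.edgeSet) S.sym2) := by
    refine disjoint_filter_filter (disjoint_left.2 ?_)
    simp [hv]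
  have hnew : filter (· ∈ G.edgeSet) (image (s(v, ·)) (insert v S)) =
      image (s(v, ·)) {w ∈ S | G.Adj v w} := by
    simp [filter_image, filter_insert]
  rw [edgeCount, sym2_insert, filter_union, card_union_of_disjoint hdisj, hnew,
    card_image_of_injective _ fun _ _ ↦ Sym2.congr_right.1, add_comm]
  rfl

theorem edgeCount_erase (hv : v ∈ S) :
    edgeCount G (S.erase v) + degreeInto G v S = edgeCount G S := by
  rw [← degreeInto_erase_self, ← edgeCount_insert (notMem_erase v S), insert_erase hv]

theorem card_interedges_union_right (S : Finset α) {A B : Finset α} (hAB : Disjoint A B) :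
    #(G.interedges S (A ∪ B)) = #(G.interedges S A) + #(G.interedges S B) := by
  simp only [← sum_degreeInto, degreeInto_union hAB, sum_add_distrib]

theorem edgeCount_union (hST : Disjoint S T) :
    edgeCount G (S ∪ T) = edgeCount G S + edgeCount G T + #(G.interedges S T) := by
  rw [← sum_degreeInto]
  induction S using Finset.induction_on with
  | empty => simp
  | insert v S hv ih =>
    rw [disjoint_insert_left] at hST
    rw [insert_union, edgeCount_insert (by simp [hv, hST.1]), ih hST.2, edgeCount_insert hv,
      sum_insert hv, degreeInto_union hST.2]
    ring

theorem edgeCount_add_edgeCount (A B : Finset α) :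
    edgeCount G A + edgeCount G B + #(G.interedges (A \ B) (B \ A)) =
      edgeCount G (A ∪ B) + edgeCount G (A ∩ B) := by
  have hA := edgeCount_union (G := G) (disjoint_sdiff_inter A B)
  have hAB := edgeCount_union (G := G) (sdiff_disjoint (s := B) (t := A))
  have hcross := card_interedges_union_right (G := G) (A \ B) (disjoint_sdiff_inter B A)
  rw [sdiff_union_inter] at hA
  rw [sdiff_union_self_eq_union] at hAB
  rw [sdiff_union_inter, inter_comm B A] at hcross
  omega

theorem edgeCount_add_edgeCount_le (A B : Finset α) :
    edgeCount G A + edgeCount G B ≤ edgeCount G (A ∪ B) + edgeCount G (A ∩ B) := by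
  rw [← edgeCount_add_edgeCount]
  exact Nat.le_add_right _ _

theorem sum_degreeInto_self (S : Finset α) : ∑ v ∈ S, degreeInto G v S = 2 * edgeCount G S := by
  induction S using Finset.induction_on with
  | empty => simp
  | insert v S hv ih =>
    have hnew : ∑ a ∈ S, (if G.Adj a v then 1 else 0) = degreeInto G v S := by
      simp only [degreeInto, card_filter, G.adj_comm]
    rw [sum_insert hv, edgeCount_insert hv, degreeInto_insert hv, if_neg (G.irrefl),
      sum_congr rfl fun a _ ↦ degreeInto_insert hv, sum_add_distrib, ih, hnew]
    ring

theorem degreeInto_pair {p q w : α} (hpq : p ≠ q) : degreeInto G w {p, q} =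
    (if G.Adj w p then 1 else 0) + if G.Adj w q then 1 else 0 := by
  rw [degreeInto, card_filter, sum_pair hpq]

theorem edgeCount_pair {p q : α} (h : G.Adj p q) : edgeCount G {p, q} = 1 := by
  have := sum_degreeInto_self (G := G) {p, q}
  rw [sum_pair h.ne, degreeInto_pair h.ne, degreeInto_pair h.ne] at this
  simp only [h, h.symm, SimpleGraph.irrefl, if_true, if_false] at this
  omega

theorem two_mul_edgeCount_le (S : Finset α) : 2 * edgeCount G S ≤ #S * (#S - 1) := by
  rw [← sum_degreeInto_self, ← smul_eq_mul, ← sum_const]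
  exact sum_le_sum fun v hv ↦ Nat.le_sub_one_of_lt (degreeInto_lt_card hv)

theorem edgeCount_add_two_le (hS : S.Nonempty) (hcard : #S ≤ 4) : edgeCount G S + 2 ≤ 2 * #S := by
  have hle := two_mul_edgeCount_le (G := G) S
  have hpos := hS.card_pos
  generalize #S = n at *
  interval_cases n <;> omega

theorem edgeCount_of_isNClique_four (hS : G.IsNClique 4 S) : edgeCount G S = 6 := by
  have hdeg : ∑ v ∈ S, degreeInto G v S = ∑ v ∈ S, 3 :=
    sum_congr rfl fun v hv ↦ by rw [degreeInto_of_isClique hS.isClique hv, hS.card_eq]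
  rw [sum_degreeInto_self, sum_const, hS.card_eq, smul_eq_mul] at hdeg
  omega

theorem edgeCount_sup_edge {x y : α} (hxy : x ≠ y) (hadj : ¬G.Adj x y) (S : Finset α) :
    edgeCount (G ⊔ SimpleGraph.edge x y) S =
      edgeCount G S + if x ∈ S ∧ y ∈ S then 1 else 0 := by
  have hfilter : {e ∈ S.sym2 | e ∈ (G ⊔ SimpleGraph.edge x y).edgeSet} =
      {e ∈ S.sym2 | e ∈ G.edgeSet} ∪ if x ∈ S ∧ y ∈ S then {s(x, y)} else ∅ := by
    ext e
    split_ifs with hS <;>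
      simp only [SimpleGraph.edgeSet_sup, SimpleGraph.edgeSet_edge_of_ne hxy, mem_filter,
        mem_union, Set.mem_union, Set.mem_singleton_iff, mem_singleton, notMem_empty] <;>
      grind [mk_mem_sym2_iff]
  rw [edgeCount, hfilter, card_union_of_disjoint, apply_ite card]
  · rfl
  · split_ifs <;> simp [hadj]

end Counting

section Tight

variable {α : Type*} [DecidableEq α]

/-- Every nonempty `S ⊆ V` induces at most `2|S| - 1` edges of `G`. -/
def IsSparseOn (G : SimpleGraph α) [DecidableRel G.Adj] (V : Finset α) : Prop :=
  ∀ S ⊆ V, S.Nonempty → edgeCount G S < 2 * #S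

/-- A vertex set inducing exactly `2|S| - 1` edges. The empty set does not qualify. -/
def IsTightSet (G : SimpleGraph α) [DecidableRel G.Adj] (S : Finset α) : Prop :=
  edgeCount G S + 1 = 2 * #S

/-- The subgraph of `G` induced on `V` is (2,1)-tight. -/
structure IsTightOn (G : SimpleGraph α) [DecidableRel G.Adj] (V : Finset α) : Prop where
  isSparseOn : IsSparseOn G V
  isTightSet : IsTightSet G V

variable {G : SimpleGraph α} [DecidableRel G.Adj] {v : α} {A B K L S T V : Finset α}

theorem IsTightSet.nonempty (hT : IsTightSet G T) : T.Nonempty := by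
  rw [nonempty_iff_ne_empty]
  rintro rfl
  simp [IsTightSet] at hT

theorem IsTightSet.four_lt_card (hT : IsTightSet G T) : 4 < #T := by
  by_contra! hle
  have := edgeCount_add_two_le (G := G) hT.nonempty hle
  unfold IsTightSet at hT
  omega

namespace IsSparseOn

theorem mono (hV : IsSparseOn G V) (hSV : S ⊆ V) : IsSparseOn G S :=
  fun T hTS ↦ hV T (hTS.trans hSV)

theorem isTightSet_inter_and_union (hV : IsSparseOn G V) (hAV : A ⊆ V) (hBV : B ⊆ V)
    (hA : IsTightSet G A) (hB : IsTightSet G B) (hAB : (A ∩ B).Nonempty) :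
    IsTightSet G (A ∩ B) ∧ IsTightSet G (A ∪ B) := by
  have hsuper := edgeCount_add_edgeCount_le (G := G) A B
  have hinter := hV _ (inter_subset_left.trans hAV) hAB
  have hunion := hV _ (union_subset hAV hBV) (hAB.mono (inter_subset_left.trans subset_union_left))
  have hcard := card_union_add_card_inter A B
  unfold IsTightSet at *
  omega

theorem degreeInto_le_two (hV : IsSparseOn G V) (hTV : T ⊆ V) (hT : IsTightSet G T) (hv : v ∈ V)
    (hvT : v ∉ T) : degreeInto G v T ≤ 2 := by
  have hsparse := hV _ (insert_subset hv hTV) (insert_nonempty v T)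
  rw [edgeCount_insert hvT, card_insert_of_notMem hvT] at hsparse
  unfold IsTightSet at hT
  omega

theorem isTightSet_insert (hV : IsSparseOn G V) (hTV : T ⊆ V) (hT : IsTightSet G T) (hv : v ∈ V)
    (hvT : v ∉ T) (hdeg : 2 ≤ degreeInto G v T) : IsTightSet G (insert v T) := by
  have := hV.degreeInto_le_two hTV hT hv hvT
  unfold IsTightSet at *
  rw [edgeCount_insert hvT, card_insert_of_notMem hvT]
  omega

theorem card_inter_le_one_or_subset (hV : IsSparseOn G V) (hKV : K ⊆ V) (hTV : T ⊆ V)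
    (hK : G.IsNClique 4 K) (hT : IsTightSet G T) : #(K ∩ T) ≤ 1 ∨ K ⊆ T := by
  by_contra! h
  have hlt : #(K ∩ T) < #K :=
    card_lt_card (inter_subset_left.ssubset_of_ne fun heq ↦ h.2 (inter_eq_left.1 heq))
  have hsuper := edgeCount_add_edgeCount_le (G := G) K T
  have hunion := hV _ (union_subset hKV hTV) (hT.nonempty.mono subset_union_right)
  have hcard := card_union_add_card_inter K T
  have hinter := two_mul_edgeCount_le (G := G) (K ∩ T)
  rw [edgeCount_of_isNClique_four hK] at hsuper
  rw [hK.card_eq] at hlt hcard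
  obtain heq | heq : #(K ∩ T) = 2 ∨ #(K ∩ T) = 3 := by omega
  · rw [heq] at hinter hcard
    unfold IsTightSet at hT
    omega
  · rw [heq] at hinter hcard
    unfold IsTightSet at hT
    omega

theorem isTightSet_union_of_isNClique (hV : IsSparseOn G V) (hKV : K ⊆ V) (hLV : L ⊆ V)
    (hK : G.IsNClique 4 K) (hL : G.IsNClique 4 L) (htwo : 2 ≤ #(K ∩ L)) (hthree : #(K ∩ L) ≤ 3) :
    IsTightSet G (K ∪ L) := by
  have hsuper := edgeCount_add_edgeCount_le (G := G) K L
  have hne : (K ∪ L).Nonempty := card_pos.1 (by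
    have := card_le_card (inter_subset_left.trans subset_union_left : K ∩ L ⊆ K ∪ L)
    omega)
  have hunion := hV _ (union_subset hKV hLV) hne
  have hcard := card_union_add_card_inter K L
  have hinter := two_mul_edgeCount_le (G := G) (K ∩ L)
  rw [edgeCount_of_isNClique_four hK, edgeCount_of_isNClique_four hL] at hsuper
  rw [hK.card_eq, hL.card_eq] at hcard
  unfold IsTightSet
  generalize #(K ∩ L) = n at *
  interval_cases n <;> omega

theorem eq_union_of_isNClique (hV : IsSparseOn G V) (hKV : K ⊆ V) (hLV : L ⊆ V)
    (hK : G.IsNClique 4 K) (hL : G.IsNClique 4 L) (htwo : 2 ≤ #(K ∩ L)) (hT : IsTightSet G T)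
    (hTKL : T ⊆ K ∪ L) : T = K ∪ L := by
  have hTV := hTKL.trans (union_subset hKV hLV)
  have hKT := hV.card_inter_le_one_or_subset hKV hTV hK hT
  have hLT := hV.card_inter_le_one_or_subset hLV hTV hL hT
  have hKT_of_subset : L ⊆ T → #(K ∩ L) ≤ #(K ∩ T) :=
    fun h ↦ card_le_card (inter_subset_inter_left h)
  have hLT_of_subset : K ⊆ T → #(K ∩ L) ≤ #(L ∩ T) :=
    fun h ↦ inter_comm K L ▸ card_le_card (inter_subset_inter_left h)
  have hcard : #T ≤ #(K ∩ T) + #(L ∩ T) := by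
    simpa only [← union_inter_distrib_right, inter_eq_right.2 hTKL] using
      card_union_le (K ∩ T) (L ∩ T)
  have := hT.four_lt_card
  rcases hKT with hKT | hKT <;> rcases hLT with hLT | hLT
  · omega
  · exact absurd (hKT_of_subset hLT) (by omega)
  · exact absurd (hLT_of_subset hKT) (by omega)
  · exact hTKL.antisymm (union_subset hKT hLT)

theorem of_card_le_six (hV : #V ≤ 6) (hcount : edgeCount G V < 2 * #V)
    (hdeg : ∀ v ∈ V, 2 ≤ degreeInto G v V) : IsSparseOn G V := by
  intro S hSV hS
  obtain hcard | hcard := le_or_gt #S 4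
  · have := edgeCount_add_two_le (G := G) hS hcard
    omega
  obtain rfl | hssub := hSV.eq_or_ssubset
  · exact hcount
  obtain ⟨w, hwV, hSw⟩ := ssubset_iff_exists_subset_erase.1 hssub
  have hVw := card_erase_add_one hwV
  obtain rfl := eq_of_subset_of_card_le hSw (by omega)
  have := edgeCount_erase (G := G) hwV
  have := hdeg w hwV
  omega

end IsSparseOn

theorem IsTightOn.two_le_degreeInto (hG : IsTightOn G V) (hv : v ∈ V) : 2 ≤ degreeInto G v V := by
  have herase := edgeCount_erase (G := G) hv
  have hcard := card_erase_add_one hv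
  have hcard_lt := hG.isTightSet.four_lt_card
  have hsparse := hG.isSparseOn _ (erase_subset v V) (card_pos.1 (by omega))
  have htight := hG.isTightSet
  unfold IsTightSet at htight
  omega

end Tight

section Moves

variable {α : Type*} [DecidableEq α] {G H : SimpleGraph α} [DecidableRel G.Adj]
  [DecidableRel H.Adj] {v x y : α} {A B V : Finset α}

theorem IsSparseOn.congr (hGH : ∀ a ∈ V, ∀ b ∈ V, G.Adj a b ↔ H.Adj a b) (hG : IsSparseOn G V) :
    IsSparseOn H V := by
  intro S hSV hS
  rw [← edgeCount_congr fun a ha b hb ↦ hGH a (hSV ha) b (hSV hb)]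
  exact hG S hSV hS

theorem IsTightOn.congr (hGH : ∀ a ∈ V, ∀ b ∈ V, G.Adj a b ↔ H.Adj a b) (hG : IsTightOn G V) :
    IsTightOn H V :=
  ⟨hG.isSparseOn.congr hGH, by simpa only [IsTightSet, edgeCount_congr hGH] using hG.isTightSet⟩

theorem isSparseOn_insert (hV : IsSparseOn G V)
    (hdeg : ∀ S ⊆ V, S.Nonempty → edgeCount G S + degreeInto G v S < 2 * #S + 2) :
    IsSparseOn G (insert v V) := by
  intro T hT hTne
  by_cases hvT : v ∈ T
  · have hTV : T.erase v ⊆ V := subset_insert_iff.1 hT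
    rw [← edgeCount_erase hvT, ← card_erase_add_one hvT, ← degreeInto_erase_self]
    obtain hempty | hne := (T.erase v).eq_empty_or_nonempty
    · simp [hempty]
    · exact hdeg _ hTV hne
  · exact hV T ((subset_insert_iff_of_notMem hvT).1 hT) hTne

theorem isTightOn_insert_iff (hv : v ∉ V) (hdeg : degreeInto G v V = 2) :
    IsTightOn G (insert v V) ↔ IsTightOn G V := by
  have htight : IsTightSet G (insert v V) ↔ IsTightSet G V := by
    unfold IsTightSet
    rw [edgeCount_insert hv, card_insert_of_notMem hv]
    omega
  refine ⟨fun h ↦ ⟨h.isSparseOn.mono (subset_insert v V), htight.1 h.isTightSet⟩,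
    fun h ↦ ⟨isSparseOn_insert h.isSparseOn fun S hSV hS ↦ ?_, htight.2 h.isTightSet⟩⟩
  have := h.isSparseOn S hSV hS
  have := degreeInto_mono (G := G) (v := v) hSV
  omega

theorem isTightOn_insert_of_sup_edge (hG : IsTightOn (G ⊔ SimpleGraph.edge x y) V) (hv : v ∉ V)
    (hdeg : degreeInto G v V = 3) (hx : x ∈ V) (hy : y ∈ V) (hxy : x ≠ y) (hadj : ¬G.Adj x y)
    (hvx : G.Adj v x) (hvy : G.Adj v y) : IsTightOn G (insert v V) := by
  have hcount := edgeCount_sup_edge hxy hadj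
  have hsparse := hG.isSparseOn
  have hdeg_lt : ∀ S ⊆ V, ∀ w ∈ V, G.Adj v w → w ∉ S → degreeInto G v S < 3 := by
    intro S hSV w hw hvw hwS
    rw [← hdeg]
    refine card_lt_card ((filter_subset_filter _ hSV).ssubset_of_mem_notMem (a := w) ?_ ?_) <;>
      simp [*]
  constructor
  · have hG' : IsSparseOn G V := fun S hSV hS ↦
      (Nat.le_add_right _ _).trans_lt (hcount S ▸ hsparse S hSV hS)
    refine isSparseOn_insert hG' fun S hSV hS ↦ ?_
    have hS' := hsparse S hSV hS
    rw [hcount] at hS'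
    split_ifs at hS' with hxyS
    · have := degreeInto_mono (G := G) (v := v) hSV
      omega
    · obtain hxS | hyS := not_and_or.1 hxyS
      · have := hdeg_lt S hSV x hx hvx hxS
        omega
      · have := hdeg_lt S hSV y hy hvy hyS
        omega
  · have htight := hG.isTightSet
    unfold IsTightSet at *
    rw [hcount, if_pos ⟨hx, hy⟩] at htight
    rw [edgeCount_insert hv, hdeg, card_insert_of_notMem hv]
    omega

theorem isTightOn_sup_edge_of_insert (hG : IsTightOn G (insert v V)) (hv : v ∉ V)
    (hdeg : degreeInto G v V = 3) (hx : x ∈ V) (hy : y ∈ V) (hxy : x ≠ y) (hadj : ¬G.Adj x y)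
    (hblock : ∀ T ⊆ V, x ∈ T → y ∈ T → ¬IsTightSet G T) :
    IsTightOn (G ⊔ SimpleGraph.edge x y) V := by
  have hcount := edgeCount_sup_edge hxy hadj
  constructor
  · intro S hSV hS
    have hS' := hG.isSparseOn S (hSV.trans (subset_insert v V)) hS
    rw [hcount]
    split_ifs with hxyS
    · have := hblock S hSV hxyS.1 hxyS.2
      unfold IsTightSet at this
      omega
    · exact hS'
  · have htight := hG.isTightSet
    unfold IsTightSet at *
    rw [edgeCount_insert hv, hdeg, card_insert_of_notMem hv] at htight
    rw [hcount, if_pos ⟨hx, hy⟩]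
    omega

/- If two neighbours `x`, `y` of the degree-3 vertex are blocked by `T`, then the third neighbour
`z` enlarges `T` to a tight set containing all three, either directly or by a union with a second
blocking set. -/
theorem IsSparseOn.adj_of_forall_isTightSet (hG : IsSparseOn G (insert v V)) (hv : v ∉ V)
    (hdeg : degreeInto G v V = 3)
    (hblock : ∀ x ∈ V, ∀ y ∈ V, G.Adj v x → G.Adj v y → x ≠ y → ¬G.Adj x y →
      ∃ T ⊆ V, x ∈ T ∧ y ∈ T ∧ IsTightSet G T)
    (hx : x ∈ V) (hy : y ∈ V) (hvx : G.Adj v x) (hvy : G.Adj v y) (hxy : x ≠ y) : G.Adj x y := by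
  obtain ⟨z, hz, hzxy⟩ : ∃ z ∈ V.filter (G.Adj v), z ∉ ({x, y} : Finset α) :=
    exists_mem_notMem_of_card_lt_card
      ((card_pair hxy).trans_lt ((Nat.lt_succ_self 2).trans_eq hdeg.symm))
  obtain ⟨hzx, hzy⟩ : z ≠ x ∧ z ≠ y := by simpa using hzxy
  obtain ⟨hzV, hvz⟩ := mem_filter.1 hz
  have not_blocked : ∀ T ⊆ V, IsTightSet G T → x ∈ T → y ∈ T → z ∉ T := by
    intro T hTV hT hxT hyT hzT
    have hle := hG.degreeInto_le_two (hTV.trans (subset_insert v V)) hT (mem_insert_self v V)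
      fun h ↦ hv (hTV h)
    refine hle.not_gt (two_lt_card.2 ⟨x, ?_, y, ?_, z, ?_, hxy, hzx.symm, hzy.symm⟩) <;> simp [*]
  by_contra hadj
  obtain ⟨T, hTV, hxT, hyT, hT⟩ := hblock x hx y hy hvx hvy hxy hadj
  have hzT := not_blocked T hTV hT hxT hyT
  have hG' := hG.mono (subset_insert v V)
  have adj_third : ∀ w ∈ T, G.Adj v w → G.Adj z w := by
    intro w hwT hvw
    by_contra hzw
    obtain ⟨T', hT'V, hzT', hwT', hT'⟩ :=
      hblock z hzV w (hTV hwT) hvz hvw (fun h ↦ hzT (h ▸ hwT)) hzw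
    have hunion := (hG'.isTightSet_inter_and_union hTV hT'V hT hT'
      ⟨w, mem_inter.2 ⟨hwT, hwT'⟩⟩).2
    exact not_blocked _ (union_subset hTV hT'V) hunion (mem_union_left _ hxT)
      (mem_union_left _ hyT) (mem_union_right _ hzT')
  have hinsert := hG'.isTightSet_insert hTV hT hzV hzT <|
    two_le_degreeInto hxy hxT hyT (adj_third x hxT hvx) (adj_third y hyT hvy)
  exact not_blocked _ (insert_subset hzV hTV) hinsert (mem_insert_of_mem hxT)
    (mem_insert_of_mem hyT) (mem_insert_self z T)

theorem IsTightOn.union (hA : IsTightOn G A) (hB : IsTightOn G B) (hAB : Disjoint A B)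
    (hcross : #(G.interedges A B) = 1) : IsTightOn G (A ∪ B) := by
  constructor
  · intro S hS hSne
    have hsplit : (S ∩ A) ∪ (S ∩ B) = S := by rw [← inter_union_distrib_left, inter_eq_left.2 hS]
    have hdisj : Disjoint (S ∩ A) (S ∩ B) := hAB.mono inter_subset_right inter_subset_right
    have hcross' : #(G.interedges (S ∩ A) (S ∩ B)) ≤ 1 :=
      hcross ▸ card_le_card (G.interedges_mono inter_subset_right inter_subset_right)
    obtain hSA | hSA := (S ∩ A).eq_empty_or_nonempty
    · rw [hSA, empty_union] at hsplit
      exact hB.isSparseOn S (inter_eq_left.1 hsplit) hSne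
    obtain hSB | hSB := (S ∩ B).eq_empty_or_nonempty
    · rw [hSB, union_empty] at hsplit
      exact hA.isSparseOn S (inter_eq_left.1 hsplit) hSne
    have hltA := hA.isSparseOn _ inter_subset_right hSA
    have hltB := hB.isSparseOn _ inter_subset_right hSB
    have hcard := card_union_of_disjoint hdisj
    have hcount := edgeCount_union (G := G) hdisj
    rw [hsplit] at hcard hcount
    omega
  · have htA := hA.isTightSet
    have htB := hB.isTightSet
    unfold IsTightSet at *
    rw [edgeCount_union hAB, hcross, card_union_of_disjoint hAB]
    omega

theorem IsTightOn.isTightOn_right_of_union (hG : IsTightOn G (A ∪ B)) (hAB : Disjoint A B)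
    (hA : IsTightSet G A) (hB : B.Nonempty) (hcross : #(G.interedges A B) < 2) :
    #(G.interedges A B) = 1 ∧ IsTightOn G B := by
  have hsparse := hG.isSparseOn.mono subset_union_right
  have hBcount := hsparse B subset_rfl hB
  have htight := hG.isTightSet
  unfold IsTightSet at hA htight
  rw [edgeCount_union hAB, card_union_of_disjoint hAB] at htight
  exact ⟨by omega, hsparse, by unfold IsTightSet; omega⟩

end Moves

section Contraction

variable {α : Type*} [DecidableEq α] {G H : SimpleGraph α} {v w : α} {F R S T U : Finset α}

/-- The graph obtained from `G` by identifying all vertices of `F` with `v`. The vertex set does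
not shrink: the vertices of `F` other than `v` become isolated. -/
def contractTo (G : SimpleGraph α) (F : Finset α) (v : α) : SimpleGraph α :=
  G.map fun x ↦ if x ∈ F then v else x

theorem contractTo_adj_of_notMem {a b : α} (ha : a ∉ F) (hb : b ∉ F) (hav : a ≠ v) (hbv : b ≠ v) :
    (contractTo G F v).Adj a b ↔ G.Adj a b := by
  constructor
  · rintro ⟨-, a', b', hab, ha', hb'⟩
    grind
  · exact fun hab ↦ ⟨hab.ne, a, b, hab, if_neg ha, if_neg hb⟩

theorem contractTo_adj_right (hv : ∀ w, ¬G.Adj w v) (hw : w ∉ F) (hwv : w ≠ v) :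
    (contractTo G F v).Adj w v ↔ ∃ x ∈ F, G.Adj w x := by
  constructor
  · rintro ⟨-, w', x, hwx, hw', hx⟩
    grind
  · rintro ⟨x, hxF, hwx⟩
    exact ⟨hwv, w, x, hwx, if_neg hw, if_pos hxF⟩

variable [DecidableRel G.Adj] [DecidableRel H.Adj]

/-- `H` on `insert v R` arises from `G` on `R ∪ F` by contracting `F` to the vertex `v`, where `U`
is the set of vertices of `R` with two neighbours in `F`. The condition on the number of edges
makes the contraction preserve `2|V| - |E|`: for a 4-clique `F` it forces `U = ∅`, the inverse of
a vertex-to-`K₄` move, and for an edge `F` it forces `#U = 1`, the inverse of a vertex split. -/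
structure IsContraction (G H : SimpleGraph α) [DecidableRel G.Adj] (R F U : Finset α) (v : α) :
    Prop where
  notMem : v ∉ R
  disjoint : Disjoint R F
  subset : U ⊆ R
  adj_iff : ∀ a ∈ R, ∀ b ∈ R, H.Adj a b ↔ G.Adj a b
  adj_new_iff : ∀ w ∈ R, H.Adj w v ↔ ∃ x ∈ F, G.Adj w x
  degreeInto_eq_two : ∀ w ∈ U, degreeInto G w F = 2
  degreeInto_le_one : ∀ w ∈ R \ U, degreeInto G w F ≤ 1
  edgeCount_add : edgeCount G F + #U + 2 = 2 * #F

theorem isContraction_contractTo (hv : ∀ w, ¬G.Adj w v) (hvR : v ∉ R) (hRF : Disjoint R F)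
    (hUR : U ⊆ R) (hU : ∀ w ∈ U, degreeInto G w F = 2)
    (hRU : ∀ w ∈ R \ U, degreeInto G w F ≤ 1) (hcount : edgeCount G F + #U + 2 = 2 * #F) :
    IsContraction G (contractTo G F v) R F U v where
  notMem := hvR
  disjoint := hRF
  subset := hUR
  adj_iff _ ha _ hb := contractTo_adj_of_notMem (disjoint_left.1 hRF ha) (disjoint_left.1 hRF hb)
    (ne_of_mem_of_not_mem ha hvR) (ne_of_mem_of_not_mem hb hvR)
  adj_new_iff _ hw := contractTo_adj_right hv (disjoint_left.1 hRF hw) (ne_of_mem_of_not_mem hw hvR)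
  degreeInto_eq_two := hU
  degreeInto_le_one := hRU
  edgeCount_add := hcount

namespace IsContraction

theorem degreeInto_eq (h : IsContraction G H R F U v) (hw : w ∈ R) :
    degreeInto G w F = (if H.Adj v w then 1 else 0) + if w ∈ U then 1 else 0 := by
  have hpos : H.Adj v w ↔ 0 < degreeInto G w F := by
    rw [H.adj_comm, h.adj_new_iff w hw, degreeInto_pos]
  by_cases hwU : w ∈ U
  · have := h.degreeInto_eq_two w hwU
    simp [hpos, this, hwU]
  · have := h.degreeInto_le_one w (mem_sdiff.2 ⟨hw, hwU⟩)
    simp only [hpos, hwU, if_false]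
    split_ifs <;> omega

theorem edgeCount_union_add (h : IsContraction G H R F U v) (hS : S ⊆ R) :
    edgeCount G (S ∪ F) + #(U \ S) + 2 = edgeCount H (insert v S) + 2 * #F := by
  have hcross : #(G.interedges S F) = degreeInto H v S + #(S ∩ U) := by
    rw [← sum_degreeInto, sum_congr rfl fun w hw ↦ h.degreeInto_eq (hS hw), sum_add_distrib]
    simp only [sum_boole, filter_mem_eq_inter, Nat.cast_id, degreeInto]
  have hcard := card_sdiff_add_card_inter U S
  have hcount := h.edgeCount_add
  rw [edgeCount_union (h.disjoint.mono_left hS), edgeCount_insert fun hv ↦ h.notMem (hS hv),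
    edgeCount_congr fun a ha b hb ↦ h.adj_iff a (hS ha) b (hS hb), hcross]
  rw [inter_comm] at hcard
  omega

theorem isTightSet_iff (h : IsContraction G H R F U v) :
    IsTightSet G (R ∪ F) ↔ IsTightSet H (insert v R) := by
  have hcount := h.edgeCount_union_add subset_rfl
  rw [sdiff_eq_empty_iff_subset.2 h.subset, card_empty] at hcount
  unfold IsTightSet
  rw [card_union_of_disjoint h.disjoint, card_insert_of_notMem h.notMem]
  omega

theorem isTightOn_contracted (h : IsContraction G H R F U v) (hG : IsTightOn G (R ∪ F))
    (hU : ∀ S ⊆ R, edgeCount G (S ∪ F) + #(U \ S) < 2 * #(S ∪ F)) :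
    IsTightOn H (insert v R) := by
  have hR : IsSparseOn H R := (hG.isSparseOn.mono subset_union_left).congr fun a ha b hb ↦
    (h.adj_iff a ha b hb).symm
  refine ⟨isSparseOn_insert hR fun S hSR _ ↦ ?_, h.isTightSet_iff.1 hG.isTightSet⟩
  have hcount := h.edgeCount_union_add hSR
  have hlt := hU S hSR
  rw [card_union_of_disjoint (h.disjoint.mono_left hSR)] at hlt
  rw [← edgeCount_insert fun hv ↦ h.notMem (hSR hv)]
  omega

theorem edgeCount_union_lt (h : IsContraction G H R F U v) (hH : IsSparseOn H (insert v R))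
    (hS : S ⊆ R) (hT : T ⊆ F) (hTne : T.Nonempty) (hcard : #T ≤ 4)
    (hdeg : ∀ w ∈ R, degreeInto G w T ≤ 1) : edgeCount G (S ∪ T) < 2 * #(S ∪ T) := by
  have hcross : #(G.interedges S T) ≤ degreeInto H v S := by
    rw [← sum_degreeInto, degreeInto, card_filter]
    refine sum_le_sum fun w hw ↦ ?_
    split_ifs with hvw
    · exact hdeg w (hS hw)
    · rw [H.adj_comm, h.adj_new_iff w (hS hw)] at hvw
      push Not at hvw
      exact (degreeInto_eq_zero fun x hx ↦ hvw x (hT hx)).le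
  have hvS : v ∉ S := fun hv ↦ h.notMem (hS hv)
  have hST := h.disjoint.mono hS hT
  have hsparse := hH _ (insert_subset_insert v hS) (insert_nonempty v S)
  have hTcount := edgeCount_add_two_le (G := G) hTne hcard
  rw [edgeCount_insert hvS, card_insert_of_notMem hvS,
    edgeCount_congr fun a ha b hb ↦ h.adj_iff a (hS ha) b (hS hb)] at hsparse
  rw [edgeCount_union hST, card_union_of_disjoint hST]
  omega

theorem isTightOn_expanded (h : IsContraction G H R F U v) (hH : IsTightOn H (insert v R))
    (hF : #F ≤ 4) (hpart : ∀ T ⊂ F, ∀ w ∈ R, degreeInto G w T ≤ 1) : IsTightOn G (R ∪ F) := by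
  refine ⟨fun T hT hTne ↦ ?_, h.isTightSet_iff.2 hH.isTightSet⟩
  have hsplit : (T ∩ R) ∪ (T ∩ F) = T := by rw [← inter_union_distrib_left, inter_eq_left.2 hT]
  have hTR : T ∩ R ⊆ R := inter_subset_right
  have hTF : T ∩ F ⊆ F := inter_subset_right
  rw [← hsplit]
  obtain heq | hssub := hTF.eq_or_ssubset
  · have hcount := h.edgeCount_union_add hTR
    have hvS : v ∉ T ∩ R := fun hv ↦ h.notMem (hTR hv)
    have hsparse := hH.isSparseOn _ (insert_subset_insert v hTR) (insert_nonempty v _)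
    rw [card_insert_of_notMem hvS] at hsparse
    rw [heq, card_union_of_disjoint (h.disjoint.mono_left hTR)]
    omega
  obtain hempty | hne := (T ∩ F).eq_empty_or_nonempty
  · have hSne : (T ∩ R).Nonempty := by rwa [← hsplit, hempty, union_empty] at hTne
    rw [hempty, union_empty, ← edgeCount_congr fun a ha b hb ↦ h.adj_iff a (hTR ha) b (hTR hb)]
    exact hH.isSparseOn _ (hTR.trans (subset_insert v R)) hSne
  · exact h.edgeCount_union_lt hH.isSparseOn hTR hTF hne ((card_le_card hTF).trans hF)
      (hpart _ hssub)

end IsContraction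

end Contraction

section Discharging

variable {α : Type*} [DecidableEq α]

/-- The closed neighbourhood of `v` in the subgraph of `G` induced on `V`. -/
def closedNbhd (G : SimpleGraph α) [DecidableRel G.Adj] (V : Finset α) (v : α) : Finset α :=
  insert v {w ∈ V | G.Adj v w}

/-- Inclusion-minimal among the tight sets properly contained in `V`. -/
def IsMinimalTight (G : SimpleGraph α) [DecidableRel G.Adj] (V M : Finset α) : Prop :=
  Minimal (fun T ↦ T ⊂ V ∧ IsTightSet G T) M

/-- The subgraph of `G` induced on `V` is a tight graph to which no inverse move applies: it has no
vertex of degree 2 to delete, all inverse edge splits, `K₄`-contractions and edge contractions are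
blocked, and no proper tight set can be split off along a single edge. The last condition excludes
the base graphs `K₅ - e` and `K₄ ⊔ K₄`, the unions of two 4-cliques sharing 3 or 2 vertices. A
minimal counterexample to the construction theorem has these properties. -/
structure IsMoveIrreducible (G : SimpleGraph α) [DecidableRel G.Adj] (V : Finset α) : Prop where
  mem_of_adj : ∀ ⦃a b⦄, G.Adj a b → b ∈ V
  isTightOn : IsTightOn G V
  three_le_degree : ∀ v ∈ V, 3 ≤ degreeInto G v V
  adj_of_degree_eq_three : ∀ v ∈ V, degreeInto G v V = 3 →
    ∀ a b, G.Adj v a → G.Adj v b → a ≠ b → G.Adj a b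
  exists_two_le_degreeInto : ∀ K ⊆ V, G.IsNClique 4 K → ∃ w ∈ V, w ∉ K ∧ 2 ≤ degreeInto G w K
  exists_isTightSet : ∀ p q r, G.Adj p q → G.Adj p r → G.Adj q r →
    (∀ x, G.Adj p x → G.Adj q x → x = r) → ∃ T ⊆ V, p ∈ T ∧ q ∈ T ∧ r ∉ T ∧ IsTightSet G T
  two_le_card_interedges : ∀ M ⊂ V, IsTightSet G M → 2 ≤ #(G.interedges M (V \ M))
  union_ne : ∀ K ⊆ V, ∀ L ⊆ V, G.IsNClique 4 K → G.IsNClique 4 L →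
    2 ≤ #(K ∩ L) → #(K ∩ L) ≤ 3 → K ∪ L ≠ V

open Classical in
/-- The vertices of degree 3 that lie in no minimal tight set. In an irreducible graph these are
the only vertices of degree less than 4 that are not paid for by the edges leaving a tight set. -/
noncomputable def exposedVertices (G : SimpleGraph α) [DecidableRel G.Adj] (V : Finset α) :
    Finset α :=
  {v ∈ V | degreeInto G v V = 3 ∧ ∀ M, IsMinimalTight G V M → v ∉ M}

/-- The closed neighbourhoods of the exposed vertices, which are 4-cliques in an irreducible
graph. -/
noncomputable def exposedCliques (G : SimpleGraph α) [DecidableRel G.Adj] (V : Finset α) :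
    Finset (Finset α) :=
  (exposedVertices G V).image (closedNbhd G V)

/-- The charge a vertex of degree at least 5 hands out: one unit per exposed clique through it. -/
noncomputable def charge (G : SimpleGraph α) [DecidableRel G.Adj] (V : Finset α) (a : α) : ℕ :=
  if 5 ≤ degreeInto G a V then #{K ∈ exposedCliques G V | a ∈ K} else 0

variable {G : SimpleGraph α} [DecidableRel G.Adj] {a p q v w : α} {B K L M N V : Finset α}

theorem self_mem_closedNbhd : v ∈ closedNbhd G V v :=
  mem_insert_self _ _

theorem closedNbhd_subset (hv : v ∈ V) : closedNbhd G V v ⊆ V :=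
  insert_subset hv (filter_subset _ _)

theorem mem_exposedVertices : v ∈ exposedVertices G V ↔
    v ∈ V ∧ degreeInto G v V = 3 ∧ ∀ M, IsMinimalTight G V M → v ∉ M := by
  simp only [exposedVertices, mem_filter]

theorem charge_le (G : SimpleGraph α) [DecidableRel G.Adj] (V : Finset α) (a : α) :
    charge G V a ≤ #{K ∈ exposedCliques G V | a ∈ K} := by
  rw [charge]
  split_ifs <;> simp

theorem IsMinimalTight.eq_of_inter_nonempty (hM : IsMinimalTight G V M)
    (hN : IsMinimalTight G V N) (hV : IsSparseOn G V) (hMN : (M ∩ N).Nonempty) : M = N := by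
  obtain ⟨hMV, hMtight⟩ := hM.1
  obtain ⟨hNV, hNtight⟩ := hN.1
  have hinter := (hV.isTightSet_inter_and_union hMV.subset hNV.subset hMtight hNtight hMN).1
  have hinterV : M ∩ N ⊂ V := inter_subset_left.trans_ssubset hMV
  exact (hM.eq_of_le ⟨hinterV, hinter⟩ inter_subset_left).symm.trans
    (hN.eq_of_le ⟨hinterV, hinter⟩ inter_subset_right)

theorem subset_of_mem_exposedCliques (hK : K ∈ exposedCliques G V) : K ⊆ V := by
  obtain ⟨v, hv, rfl⟩ := mem_image.1 hK
  exact closedNbhd_subset (mem_exposedVertices.1 hv).1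

theorem exists_mem_exposedVertices (hK : K ∈ exposedCliques G V) :
    ∃ v ∈ exposedVertices G V, v ∈ K := by
  obtain ⟨v, hv, rfl⟩ := mem_image.1 hK
  exact ⟨v, hv, self_mem_closedNbhd⟩

namespace IsMoveIrreducible

theorem isNClique_closedNbhd (hG : IsMoveIrreducible G V) (hv : v ∈ V)
    (hdeg : degreeInto G v V = 3) : G.IsNClique 4 (closedNbhd G V v) := by
  have hnbrs : G.IsNClique 3 {w ∈ V | G.Adj v w} := by
    refine SimpleGraph.isNClique_iff _ |>.2 ⟨fun a ha b hb hab ↦ ?_, hdeg⟩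
    exact hG.adj_of_degree_eq_three v hv hdeg a b (mem_filter.1 ha).2 (mem_filter.1 hb).2 hab
  exact hnbrs.insert fun b hb ↦ (mem_filter.1 hb).2

theorem isNClique_of_mem_exposedCliques (hG : IsMoveIrreducible G V)
    (hK : K ∈ exposedCliques G V) : G.IsNClique 4 K := by
  obtain ⟨v, hv, rfl⟩ := mem_image.1 hK
  obtain ⟨hvV, hdeg, -⟩ := mem_exposedVertices.1 hv
  exact hG.isNClique_closedNbhd hvV hdeg

theorem eq_of_two_le_card_inter (hG : IsMoveIrreducible G V) (hK : K ∈ exposedCliques G V)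
    (hLV : L ⊆ V) (hL : G.IsNClique 4 L) (hKL : 2 ≤ #(K ∩ L)) : K = L := by
  obtain ⟨v, hv, hvK⟩ := exists_mem_exposedVertices hK
  have hKV := subset_of_mem_exposedCliques hK
  have hKclq := hG.isNClique_of_mem_exposedCliques hK
  have hsparse := hG.isTightOn.isSparseOn
  by_contra hne
  have hle : #(K ∩ L) ≤ 3 := by
    by_contra! hfour
    have hKinter : K ∩ L = K :=
      eq_of_subset_of_card_le inter_subset_left (hKclq.card_eq.trans_le hfour)
    exact hne (eq_of_subset_of_card_le (inter_eq_left.1 hKinter) (by rw [hKclq.2, hL.2]))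
  have hunion : IsMinimalTight G V (K ∪ L) := by
    refine ⟨⟨(union_subset hKV hLV).ssubset_of_ne (hG.union_ne K hKV L hLV hKclq hL hKL hle),
      hsparse.isTightSet_union_of_isNClique hKV hLV hKclq hL hKL hle⟩, fun T hT hTKL ↦ ?_⟩
    exact (hsparse.eq_union_of_isNClique hKV hLV hKclq hL hKL hT.2 hTKL).ge
  exact (mem_exposedVertices.1 hv).2.2 _ hunion (mem_union_left L hvK)

theorem card_inter_le_one (hG : IsMoveIrreducible G V) (hK : K ∈ exposedCliques G V)
    (hM : IsMinimalTight G V M) : #(K ∩ M) ≤ 1 := by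
  obtain ⟨v, hv, hvK⟩ := exists_mem_exposedVertices hK
  refine (hG.isTightOn.isSparseOn.card_inter_le_one_or_subset (subset_of_mem_exposedCliques hK)
    hM.1.1.subset (hG.isNClique_of_mem_exposedCliques hK) hM.1.2).resolve_right fun hKM ↦ ?_
  exact (mem_exposedVertices.1 hv).2.2 M hM (hKM hvK)

theorem exists_common_neighbor (hG : IsMoveIrreducible G V) (hKV : K ⊆ V) (hK : G.IsNClique 4 K)
    (hw : w ∉ K) (hp : p ∈ K) (hq : q ∈ K) (hpq : p ≠ q) (hwp : G.Adj w p) (hwq : G.Adj w q) :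
    ∃ x ≠ q, G.Adj w x ∧ G.Adj p x := by
  by_contra! hcon
  obtain ⟨T, hTV, hwT, hpT, hqT, hT⟩ := hG.exists_isTightSet w p q hwp hwq
    (hK.isClique hp hq hpq) fun x hwx hpx ↦ by_contra fun hx ↦ hcon x hx hwx hpx
  have hcross : 0 < #(G.interedges (T \ K) (K \ T)) :=
    card_pos.2 ⟨(w, q), G.mk_mem_interedges_iff.2 (by simp [*])⟩
  have hcount := edgeCount_add_edgeCount (G := G) T K
  have hunion := hG.isTightOn.isSparseOn _ (union_subset hTV hKV) ⟨w, mem_union_left K hwT⟩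
  have hcard := card_union_add_card_inter T K
  have hinter := edgeCount_add_two_le (G := G) (S := T ∩ K) ⟨p, mem_inter.2 ⟨hpT, hp⟩⟩
    ((card_le_card inter_subset_right).trans hK.card_eq.le)
  rw [edgeCount_of_isNClique_four hK] at hcount
  rw [hK.card_eq] at hcard
  unfold IsTightSet at hT
  omega

theorem five_le_degree (hG : IsMoveIrreducible G V) (hKV : K ⊆ V) (hK : G.IsNClique 4 K)
    (hw : w ∉ K) (hpq : p ≠ q) (hnbrs : {x ∈ K | G.Adj w x} = {p, q}) :
    5 ≤ degreeInto G p V := by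
  have hmem : ∀ x, x ∈ K ∧ G.Adj w x ↔ x = p ∨ x = q := by simpa [Finset.ext_iff] using hnbrs
  obtain ⟨hp, hwp⟩ := (hmem p).2 (.inl rfl)
  obtain ⟨hq, hwq⟩ := (hmem q).2 (.inr rfl)
  obtain ⟨x, hxq, hwx, hpx⟩ := hG.exists_common_neighbor hKV hK hw hp hq hpq hwp hwq
  have hxK : x ∉ K := fun h ↦ ((hmem x).1 ⟨h, hwx⟩).elim hpx.ne' hxq
  have hsub : insert w (insert x (K.erase p)) ⊆ {y ∈ V | G.Adj p y} := by
    intro y hy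
    have hpy : G.Adj p y := by
      obtain rfl | rfl | ⟨hyp, hyK⟩ : y = w ∨ y = x ∨ y ≠ p ∧ y ∈ K := by simpa using hy
      · exact hwp.symm
      · exact hpx
      · exact hK.isClique hp hyK hyp.symm
    exact mem_filter.2 ⟨hG.mem_of_adj hpy, hpy⟩
  calc 5 = #(insert w (insert x (K.erase p))) := by
        rw [card_insert_of_notMem (by simp [hwx.ne, hw]), card_insert_of_notMem (by simp [hxK]),
          card_erase_of_mem hp, hK.card_eq]
    _ ≤ degreeInto G p V := card_le_card hsub

theorem exists_degreeInto_eq_two (hG : IsMoveIrreducible G V) (hK : K ∈ exposedCliques G V) :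
    ∃ w ∉ K, degreeInto G w K = 2 := by
  have hKV := subset_of_mem_exposedCliques hK
  have hKclq := hG.isNClique_of_mem_exposedCliques hK
  obtain ⟨w, hwV, hwK, htwo⟩ := hG.exists_two_le_degreeInto K hKV hKclq
  refine ⟨w, hwK, htwo.antisymm' (not_lt.1 fun hthree ↦ hwK ?_)⟩
  have hle : degreeInto G w K < 4 := by
    obtain ⟨v, -, rfl⟩ := mem_image.1 hK
    rw [← hKclq.card_eq]
    refine card_lt_card (filter_ssubset.2 ⟨v, self_mem_closedNbhd, fun hwv ↦ hwK ?_⟩)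
    exact mem_insert_of_mem (mem_filter.2 ⟨hwV, hwv.symm⟩)
  have hnbrs : G.IsNClique 3 {x ∈ K | G.Adj w x} :=
    ⟨hKclq.isClique.subset (filter_subset _ _), (Nat.le_of_lt_succ hle).antisymm hthree⟩
  have hclq := hnbrs.insert (a := w) fun x hx ↦ (mem_filter.1 hx).2
  rw [hG.eq_of_two_le_card_inter hK (insert_subset hwV ((filter_subset _ _).trans hKV)) hclq]
  · exact mem_insert_self _ _
  · refine htwo.trans (card_le_card (subset_inter (filter_subset _ _) (subset_insert _ _)))

theorem two_le_card_five_le_degree (hG : IsMoveIrreducible G V) (hK : K ∈ exposedCliques G V) :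
    2 ≤ #{a ∈ K | 5 ≤ degreeInto G a V} := by
  have hKV := subset_of_mem_exposedCliques hK
  have hKclq := hG.isNClique_of_mem_exposedCliques hK
  obtain ⟨w, hwK, hdeg⟩ := hG.exists_degreeInto_eq_two hK
  obtain ⟨p, q, hpq, hnbrs⟩ := card_eq_two.1 hdeg
  rw [← card_pair hpq]
  refine card_le_card fun x hx ↦ ?_
  have hxK : x ∈ K := (mem_filter.1 (hnbrs ▸ hx)).1
  refine mem_filter.2 ⟨hxK, ?_⟩
  obtain rfl | rfl : x = p ∨ x = q := by simpa using hx
  · exact hG.five_le_degree hKV hKclq hwK hpq hnbrs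
  · exact hG.five_le_degree hKV hKclq hwK hpq.symm (hnbrs.trans (pair_comm _ _))

theorem three_mul_card_le_degreeInto (hG : IsMoveIrreducible G V)
    (hB : ∀ K ∈ exposedCliques G V, a ∈ K → K.erase a ⊆ B) :
    3 * #{K ∈ exposedCliques G V | a ∈ K} ≤ degreeInto G a B := by
  have hdisj : ∀ K ∈ {K ∈ exposedCliques G V | a ∈ K}, ∀ L ∈ {K ∈ exposedCliques G V | a ∈ K},
      K ≠ L → Disjoint (K.erase a) (L.erase a) := by
    intro K hK L hL hKL
    obtain ⟨hK, haK⟩ := mem_filter.1 hK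
    obtain ⟨hL, haL⟩ := mem_filter.1 hL
    refine disjoint_left.2 fun x hxK hxL ↦ hKL (hG.eq_of_two_le_card_inter hK
      (subset_of_mem_exposedCliques hL) (hG.isNClique_of_mem_exposedCliques hL) ?_)
    refine one_lt_card.2 ⟨x, ?_, a, ?_, ne_of_mem_erase hxK⟩
    · exact mem_inter.2 ⟨mem_of_mem_erase hxK, mem_of_mem_erase hxL⟩
    · exact mem_inter.2 ⟨haK, haL⟩
  rw [mul_comm, ← smul_eq_mul, ← sum_const, degreeInto]
  calc ∑ K ∈ exposedCliques G V with a ∈ K, 3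
      = ∑ K ∈ exposedCliques G V with a ∈ K, #(K.erase a) := by
        refine sum_congr rfl fun K hK ↦ ?_
        obtain ⟨hK, haK⟩ := mem_filter.1 hK
        rw [card_erase_of_mem haK, (hG.isNClique_of_mem_exposedCliques hK).card_eq]
    _ = #({K ∈ exposedCliques G V | a ∈ K}.biUnion (erase · a)) := (card_biUnion hdisj).symm
    _ ≤ #{w ∈ B | G.Adj a w} := by
        refine card_le_card (biUnion_subset.2 fun K hK w hw ↦ ?_)
        obtain ⟨hK, haK⟩ := mem_filter.1 hK
        exact mem_filter.2 ⟨hB K hK haK hw, (hG.isNClique_of_mem_exposedCliques hK).isClique haK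
          (mem_of_mem_erase hw) (ne_of_mem_erase hw).symm⟩

theorem card_filter_closedNbhd_eq_le (hG : IsMoveIrreducible G V)
    (hK : K ∈ exposedCliques G V) :
    #{v ∈ exposedVertices G V | closedNbhd G V v = K} ≤ #{a ∈ K | 5 ≤ degreeInto G a V} := by
  have htwo := hG.two_le_card_five_le_degree hK
  have hle : #{v ∈ exposedVertices G V | closedNbhd G V v = K} ≤
      #{a ∈ K | ¬5 ≤ degreeInto G a V} := by
    refine card_le_card fun v hv ↦ ?_
    obtain ⟨hv, hvK⟩ := mem_filter.1 hv
    have hdeg := (mem_exposedVertices.1 hv).2.1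
    exact mem_filter.2 ⟨hvK ▸ self_mem_closedNbhd, by omega⟩
  have hsplit := card_filter_add_card_filter_not (s := K) (5 ≤ degreeInto G · V)
  rw [(hG.isNClique_of_mem_exposedCliques hK).card_eq] at hsplit
  omega

theorem card_exposedVertices_le (hG : IsMoveIrreducible G V) :
    #(exposedVertices G V) ≤ ∑ a ∈ V, charge G V a := by
  calc #(exposedVertices G V)
      = ∑ K ∈ exposedCliques G V, #{v ∈ exposedVertices G V | closedNbhd G V v = K} :=
        card_eq_sum_card_fiberwise fun v hv ↦ mem_image_of_mem _ hv
    _ ≤ ∑ K ∈ exposedCliques G V, #{a ∈ K | 5 ≤ degreeInto G a V} :=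
        sum_le_sum fun K hK ↦ hG.card_filter_closedNbhd_eq_le hK
    _ = ∑ K ∈ exposedCliques G V, #{a ∈ {a ∈ V | 5 ≤ degreeInto G a V} | a ∈ K} := by
        refine sum_congr rfl fun K hK ↦ congrArg card ?_
        rw [filter_comm, filter_mem_eq_inter,
          inter_eq_right.2 (subset_of_mem_exposedCliques hK)]
    _ = ∑ a ∈ V with 5 ≤ degreeInto G a V, #{K ∈ exposedCliques G V | a ∈ K} :=
        sum_card_bipartiteAbove_eq_sum_card_bipartiteBelow (fun K a ↦ a ∈ K)
    _ = ∑ a ∈ V, charge G V a := sum_filter _ _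

theorem four_add_charge_le (hG : IsMoveIrreducible G V) (ha : a ∈ V)
    (haM : ∀ M, IsMinimalTight G V M → a ∉ M) :
    4 + charge G V a ≤ degreeInto G a V + if a ∈ exposedVertices G V then 1 else 0 := by
  have hthree := hG.three_le_degree a ha
  rw [charge]
  split_ifs with hfive hexp hexp
  · exact absurd (mem_exposedVertices.1 hexp).2.1 (by omega)
  · have := hG.three_mul_card_le_degreeInto (a := a) (B := V) fun K hK _ ↦
      (erase_subset a K).trans (subset_of_mem_exposedCliques hK)
    omega
  · omega
  · have : degreeInto G a V ≠ 3 := fun h ↦ hexp (mem_exposedVertices.2 ⟨ha, h, haM⟩)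
    omega

theorem four_mul_card_add_charge_le (hG : IsMoveIrreducible G V) (hM : IsMinimalTight G V M) :
    4 * #M + ∑ a ∈ M, charge G V a ≤ ∑ a ∈ M, degreeInto G a V := by
  obtain ⟨hMV, htight⟩ := hM.1
  have hboundary := hG.two_le_card_interedges M hMV htight
  have hsplit : ∑ a ∈ M, degreeInto G a V = 2 * edgeCount G M + #(G.interedges M (V \ M)) := by
    rw [← sum_degreeInto_self, ← sum_degreeInto, ← sum_add_distrib]
    refine sum_congr rfl fun a _ ↦ ?_
    rw [← degreeInto_union disjoint_sdiff, union_sdiff_of_subset hMV.subset]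
  have hcharge : 3 * ∑ a ∈ M, charge G V a ≤ #(G.interedges M (V \ M)) := by
    rw [mul_sum, ← sum_degreeInto]
    refine sum_le_sum fun a ha ↦ (Nat.mul_le_mul_left 3 (charge_le G V a)).trans
      (hG.three_mul_card_le_degreeInto fun K hK haK x hx ↦ ?_)
    refine mem_sdiff.2 ⟨subset_of_mem_exposedCliques hK (mem_of_mem_erase hx),
      fun hxM ↦ ne_of_mem_erase hx ?_⟩
    exact card_le_one.1 (hG.card_inter_le_one hK hM) x (mem_inter.2 ⟨mem_of_mem_erase hx, hxM⟩) a
      (mem_inter.2 ⟨haK, ha⟩)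
  unfold IsTightSet at htight
  omega

end IsMoveIrreducible

theorem not_isMoveIrreducible : ¬IsMoveIrreducible G V := by
  classical
  intro hG
  set 𝓜 : Finset (Finset α) := {M ∈ V.powerset | IsMinimalTight G V M} with h𝓜
  set U := 𝓜.biUnion id
  have mem_𝓜 : ∀ M, M ∈ 𝓜 ↔ IsMinimalTight G V M := by
    intro M
    rw [h𝓜, mem_filter, mem_powerset, and_iff_right_iff_imp]
    exact fun hM ↦ hM.1.1.subset
  have hUV : U ⊆ V := biUnion_subset.2 fun M hM ↦ ((mem_𝓜 M).1 hM).1.1.subset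
  have hdisj : (𝓜 : Set (Finset α)).PairwiseDisjoint id := by
    intro M hM N hN hMN
    by_contra hinter
    exact hMN (((mem_𝓜 M).1 hM).eq_of_inter_nonempty ((mem_𝓜 N).1 hN) hG.isTightOn.isSparseOn
      (not_disjoint_iff_nonempty_inter.1 hinter))
  have hin : 4 * #U + ∑ a ∈ U, charge G V a ≤ ∑ a ∈ U, degreeInto G a V := by
    rw [card_biUnion hdisj, sum_biUnion hdisj, sum_biUnion hdisj, mul_sum, ← sum_add_distrib]
    exact sum_le_sum fun M hM ↦ hG.four_mul_card_add_charge_le ((mem_𝓜 M).1 hM)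
  have hout : 4 * #(V \ U) + ∑ a ∈ V \ U, charge G V a ≤
      ∑ a ∈ V \ U, degreeInto G a V + #(exposedVertices G V) := by
    calc 4 * #(V \ U) + ∑ a ∈ V \ U, charge G V a
        = ∑ a ∈ V \ U, (4 + charge G V a) := by
          rw [sum_add_distrib, sum_const, smul_eq_mul, mul_comm]
      _ ≤ ∑ a ∈ V \ U, (degreeInto G a V + if a ∈ exposedVertices G V then 1 else 0) := by
          refine sum_le_sum fun a ha ↦ ?_
          obtain ⟨haV, haU⟩ := mem_sdiff.1 ha
          exact hG.four_add_charge_le haV fun M hM haM ↦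
            haU (mem_biUnion.2 ⟨M, (mem_𝓜 M).2 hM, haM⟩)
      _ ≤ ∑ a ∈ V \ U, degreeInto G a V + #(exposedVertices G V) := by
          rw [sum_add_distrib, ← card_filter, filter_mem_eq_inter]
          exact Nat.add_le_add_left (card_le_card inter_subset_right) _
  have hcharge := hG.card_exposedVertices_le
  have hhandshake := sum_degreeInto_self (G := G) V
  have htight := hG.isTightOn.isTightSet
  rw [← sum_sdiff hUV] at hcharge hhandshake
  unfold IsTightSet at htight
  have hcard := card_sdiff_add_card_eq_card hUV
  omega

end Discharging

section FinGraph

namespace FinGraph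

/-- The simple graph on `ℕ` with the edges of `G`. -/
def toSimpleGraph (G : FinGraph) : SimpleGraph ℕ where
  Adj := G.Adj
  symm := ⟨fun a b h ↦ by rwa [Adj, Sym2.eq_swap]⟩
  loopless := ⟨fun _ h ↦ G.not_isDiag _ h rfl⟩

instance (G : FinGraph) : DecidableRel G.toSimpleGraph.Adj :=
  fun a b ↦ inferInstanceAs (Decidable (s(a, b) ∈ G.edges))

open Classical in
/-- The subgraph of `G` induced on `V`. -/
noncomputable def ofSimpleGraph (G : SimpleGraph ℕ) (V : Finset ℕ) : FinGraph where
  verts := V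
  edges := {e ∈ V.sym2 | e ∈ G.edgeSet}
  not_isDiag _ he := G.not_isDiag_of_mem_edgeSet (mem_filter.1 he).2
  mem_verts _ he _ hv := mem_sym2_iff.1 (mem_filter.1 he).1 _ hv

variable {G : FinGraph} {a b : ℕ}

theorem toSimpleGraph_adj : G.toSimpleGraph.Adj a b ↔ s(a, b) ∈ G.edges :=
  Iff.rfl

theorem mem_verts_left (h : s(a, b) ∈ G.edges) : a ∈ G.verts :=
  G.mem_verts _ h a (Sym2.mem_mk_left a b)

theorem mem_verts_right (h : s(a, b) ∈ G.edges) : b ∈ G.verts :=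
  G.mem_verts _ h b (Sym2.mem_mk_right a b)

theorem ne_of_mem_edges (h : s(a, b) ∈ G.edges) : a ≠ b :=
  G.toSimpleGraph.ne_of_adj h

theorem mem_edges_ofSimpleGraph {H : SimpleGraph ℕ} {V : Finset ℕ} :
    s(a, b) ∈ (ofSimpleGraph H V).edges ↔ H.Adj a b ∧ a ∈ V ∧ b ∈ V := by
  simp [ofSimpleGraph, and_comm]

theorem edgeCount_toSimpleGraph (S : Finset ℕ) :
    edgeCount G.toSimpleGraph S = #{e ∈ G.edges | e ∈ S.sym2} := by
  refine congrArg card (Finset.ext fun e ↦ ?_)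
  induction e using Sym2.ind
  simp only [mem_filter, SimpleGraph.mem_edgeSet, toSimpleGraph_adj, and_comm]

theorem edgeCount_verts : edgeCount G.toSimpleGraph G.verts = #G.edges := by
  rw [edgeCount_toSimpleGraph, filter_true_of_mem]
  exact fun e he ↦ mem_sym2_iff.2 (G.mem_verts e he)

theorem tight21_iff : Tight21 G ↔ IsTightOn G.toSimpleGraph G.verts := by
  constructor
  · rintro ⟨hcard, hsub⟩
    refine ⟨fun S hS hne ↦ ?_, ?_⟩
    · rw [edgeCount_toSimpleGraph]
      have := hsub S {e ∈ G.edges | e ∈ S.sym2}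
        ⟨hS, filter_subset _ _, fun e he ↦ mem_sym2_iff.1 (mem_filter.1 he).2⟩ hne
      omega
    · rw [IsTightSet, edgeCount_verts]
      omega
  · rintro ⟨hsparse, htight⟩
    rw [IsTightSet, edgeCount_verts] at htight
    refine ⟨by omega, fun S E ⟨hS, hE, hES⟩ hne ↦ ?_⟩
    have hlt := hsparse S hS hne
    have hle : #E ≤ edgeCount G.toSimpleGraph S := by
      rw [edgeCount_toSimpleGraph]
      exact card_le_card fun e he ↦ mem_filter.2 ⟨hE he, mem_sym2_iff.2 (hES e he)⟩
    omega

theorem tight21_ofSimpleGraph {H : SimpleGraph ℕ} [DecidableRel H.Adj] {V : Finset ℕ}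
    (hH : IsTightOn H V) : Tight21 (ofSimpleGraph H V) :=
  tight21_iff.2 (hH.congr fun _ ha _ hb ↦
    ⟨fun h ↦ mem_edges_ofSimpleGraph.2 ⟨h, ha, hb⟩, fun h ↦ (mem_edges_ofSimpleGraph.1 h).1⟩)

end FinGraph

variable {G G₁ G₂ G' : FinGraph} {v u v₀ v₁ p q : ℕ} {k : Fin 4 → ℕ} {f : ℕ → Fin 4} {σ : ℕ → Bool}

open FinGraph

theorem VertexAddition.tight21 (h : VertexAddition G G') (hG : Tight21 G) : Tight21 G' := by
  obtain ⟨v, a, b, hv, ha, hb, hab, hverts, hedges⟩ := h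
  have hvw : ∀ w, s(v, w) ∉ G.edges := fun w hw ↦ hv (mem_verts_left hw)
  rw [tight21_iff, hverts, isTightOn_insert_iff hv]
  · refine (tight21_iff.1 hG).congr fun x hx y hy ↦ ?_
    grind [toSimpleGraph_adj, Sym2.eq_iff]
  · rw [degreeInto, card_eq_two]
    refine ⟨a, b, hab, ?_⟩
    ext w
    rw [mem_filter, toSimpleGraph_adj, hedges]
    grind [Sym2.eq_iff]

theorem EdgeSplit.tight21 (h : EdgeSplit G G') (hG : Tight21 G) : Tight21 G' := by
  obtain ⟨v, x, y, z, hv, hx, hy, hz, hzx, hzy, hxy, hverts, hedges⟩ := h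
  have hne := ne_of_mem_edges hxy
  have hvw : ∀ w, s(v, w) ∉ G.edges := fun w hw ↦ hv (mem_verts_left hw)
  rw [tight21_iff, hverts]
  refine isTightOn_insert_of_sup_edge (x := x) (y := y) ?_ hv ?_ hx hy hne ?_ ?_ ?_
  · refine (tight21_iff.1 hG).congr fun a ha b hb ↦ ?_
    simp only [SimpleGraph.sup_adj, SimpleGraph.edge_adj, toSimpleGraph_adj, hedges, mem_insert,
      mem_erase, Sym2.eq_iff, ne_eq]
    grind
  · rw [degreeInto, card_eq_three]
    refine ⟨x, y, z, hne, hzx.symm, hzy.symm, ?_⟩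
    ext w
    rw [mem_filter, toSimpleGraph_adj, hedges]
    grind [Sym2.eq_iff]
  all_goals grind [toSimpleGraph_adj, Sym2.eq_iff]

theorem EdgeJoin.tight21 (h : EdgeJoin G₁ G₂ G') (h₁ : Tight21 G₁) (h₂ : Tight21 G₂) :
    Tight21 G' := by
  obtain ⟨a, b, hdisj, ha, hb, hverts, hedges⟩ := h
  have h₁l : ∀ x y, s(x, y) ∈ G₁.edges → x ∈ G₁.verts ∧ y ∈ G₁.verts :=
    fun _ _ h ↦ ⟨mem_verts_left h, mem_verts_right h⟩
  have h₂l : ∀ x y, s(x, y) ∈ G₂.edges → x ∈ G₂.verts ∧ y ∈ G₂.verts :=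
    fun _ _ h ↦ ⟨mem_verts_left h, mem_verts_right h⟩
  rw [disjoint_left] at hdisj
  rw [tight21_iff, hverts]
  refine IsTightOn.union ?_ ?_ (disjoint_left.2 hdisj) ?_
  · refine (tight21_iff.1 h₁).congr fun x hx y hy ↦ ?_
    grind [toSimpleGraph_adj, Sym2.eq_iff]
  · refine (tight21_iff.1 h₂).congr fun x hx y hy ↦ ?_
    grind [toSimpleGraph_adj, Sym2.eq_iff]
  · rw [card_eq_one]
    refine ⟨(a, b), ?_⟩
    ext ⟨x, y⟩
    rw [SimpleGraph.mk_mem_interedges_iff, toSimpleGraph_adj, hedges]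
    grind [Sym2.eq_iff]

/-- The edge set produced by the vertex-to-`K₄` move at `v`. -/
def vertexToK4Edges (G : FinGraph) (v : ℕ) (k : Fin 4 → ℕ) (f : ℕ → Fin 4) : Finset (Sym2 ℕ) :=
  (G.edges.filter (fun e => v ∉ e)) ∪
    {s(k 0, k 1), s(k 0, k 2), s(k 0, k 3), s(k 1, k 2), s(k 1, k 3), s(k 2, k 3)} ∪
    ((G.verts.filter (fun w => s(v, w) ∈ G.edges)).image (fun w => s(w, k (f w))))

/-- The edge set produced by the vertex splitting move at `v`. -/
def vertexSplitEdges (G : FinGraph) (v u v₀ v₁ : ℕ) (σ : ℕ → Bool) : Finset (Sym2 ℕ) :=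
  (G.edges.filter (fun e => v ∉ e)) ∪ {s(v₀, v₁), s(u, v₀), s(u, v₁)} ∪
    ((G.verts.filter (fun w => s(v, w) ∈ G.edges ∧ w ≠ u)).image
      (fun w => s(w, if σ w then v₁ else v₀)))

theorem mem_vertexToK4Edges : s(p, q) ∈ vertexToK4Edges G v k f ↔
    (s(p, q) ∈ G.edges ∧ p ≠ v ∧ q ≠ v) ∨ (∃ i j, i ≠ j ∧ p = k i ∧ q = k j) ∨
      (s(v, p) ∈ G.edges ∧ q = k (f p)) ∨ (s(v, q) ∈ G.edges ∧ p = k (f q)) := by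
  simp only [vertexToK4Edges, mem_union, mem_filter, mem_image, or_assoc]
  refine or_congr ?_ (or_congr ?_ ?_)
  · simp only [Sym2.mem_iff, not_or, ne_comm, ne_eq]
  · simp only [mem_insert, mem_singleton, Sym2.eq_iff, Fin.exists_fin_succ, Fin.exists_fin_zero]
    grind
  · have := @mem_verts_right G v
    grind [Sym2.eq_iff]

theorem mem_vertexSplitEdges : s(p, q) ∈ vertexSplitEdges G v u v₀ v₁ σ ↔
    (s(p, q) ∈ G.edges ∧ p ≠ v ∧ q ≠ v) ∨
      (s(p, q) = s(v₀, v₁) ∨ s(p, q) = s(u, v₀) ∨ s(p, q) = s(u, v₁)) ∨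
      (s(v, p) ∈ G.edges ∧ p ≠ u ∧ q = if σ p then v₁ else v₀) ∨
      (s(v, q) ∈ G.edges ∧ q ≠ u ∧ p = if σ q then v₁ else v₀) := by
  simp only [vertexSplitEdges, mem_union, mem_filter, mem_image]
  rw [or_assoc]
  refine or_congr ?_ (or_congr ?_ ?_)
  · simp only [Sym2.mem_iff, not_or, ne_comm, ne_eq]
  · simp only [mem_insert, mem_singleton]
  · constructor
    · rintro ⟨w, ⟨-, hw, hwu⟩, he⟩
      rcases Sym2.eq_iff.1 he with ⟨rfl, rfl⟩ | ⟨rfl, rfl⟩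
      · exact Or.inl ⟨hw, hwu, rfl⟩
      · exact Or.inr ⟨hw, hwu, rfl⟩
    · rintro (⟨hw, hwu, rfl⟩ | ⟨hw, hwu, rfl⟩)
      · exact ⟨p, ⟨mem_verts_right hw, hw, hwu⟩, rfl⟩
      · exact ⟨q, ⟨mem_verts_right hw, hw, hwu⟩, Sym2.eq_swap⟩

end FinGraph

section MovesPreserveTightness

open FinGraph

variable {G G' : FinGraph} {v u v₀ v₁ w p q : ℕ} {k : Fin 4 → ℕ} {f : ℕ → Fin 4} {σ : ℕ → Bool}

theorem mem_vertexToK4Edges_new (hk : k.Injective) (hkG : ∀ i, k i ∉ G.verts) (hw : w ∈ G.verts)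
    (i : Fin 4) : s(w, k i) ∈ vertexToK4Edges G v k f ↔ s(v, w) ∈ G.edges ∧ i = f w := by
  have hr := @mem_verts_right G
  rw [mem_vertexToK4Edges]
  grind [Function.Injective]

theorem isNClique_vertexToK4Edges (hk : k.Injective)
    (hedges : G'.edges = vertexToK4Edges G v k f) :
    G'.toSimpleGraph.IsNClique 4 (univ.image k) := by
  refine ⟨?_, by rw [card_image_of_injective _ hk, card_univ, Fintype.card_fin]⟩
  rw [coe_image, coe_univ, Set.image_univ]
  rintro _ ⟨i, rfl⟩ _ ⟨j, rfl⟩ hij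
  rw [toSimpleGraph_adj, hedges, mem_vertexToK4Edges]
  exact Or.inr (Or.inl ⟨i, j, fun h ↦ hij (congrArg k h), rfl, rfl⟩)

theorem isContraction_vertexToK4Edges (hk : k.Injective) (hkG : ∀ i, k i ∉ G.verts)
    (hedges : G'.edges = vertexToK4Edges G v k f) :
    IsContraction G'.toSimpleGraph G.toSimpleGraph (G.verts.erase v) (univ.image k) ∅ v := by
  have hclique := isNClique_vertexToK4Edges hk hedges
  have hnew {w} (hw : w ∈ G.verts.erase v) (i : Fin 4) :
      G'.toSimpleGraph.Adj w (k i) ↔ s(v, w) ∈ G.edges ∧ i = f w := by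
    rw [toSimpleGraph_adj, hedges, mem_vertexToK4Edges_new hk hkG (mem_of_mem_erase hw)]
  refine ⟨notMem_erase v _, ?_, empty_subset _, fun a ha b hb ↦ ?_, fun w hw ↦ ?_, by simp,
    fun w hw ↦ card_le_one.2 ?_, ?_⟩
  · simp only [disjoint_left, mem_image, mem_erase]
    grind
  · rw [toSimpleGraph_adj, toSimpleGraph_adj, hedges, mem_vertexToK4Edges]
    grind
  · rw [SimpleGraph.adj_comm, toSimpleGraph_adj]
    simp only [exists_mem_image, hnew hw, mem_univ, true_and, exists_and_left, exists_eq, and_true]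
  · rw [sdiff_empty] at hw
    simp only [mem_filter, mem_image, mem_univ, true_and]
    rintro _ ⟨⟨i, rfl⟩, hi⟩ _ ⟨⟨j, rfl⟩, hj⟩
    rw [((hnew hw i).1 hi).2, ((hnew hw j).1 hj).2]
  · rw [edgeCount_of_isNClique_four hclique, hclique.card_eq, card_empty]

theorem image_fin_four : univ.image k = {k 0, k 1, k 2, k 3} := by
  ext x
  simp [Fin.exists_fin_succ, eq_comm]

theorem VertexToK4.tight21 (h : VertexToK4 G G') (hG : Tight21 G) : Tight21 G' := by
  obtain ⟨v, k, f, hv, hk, hkG, hverts, hedges⟩ := h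
  have hcontr := isContraction_vertexToK4Edges hk hkG hedges
  rw [tight21_iff, hverts, ← image_fin_four]
  rw [tight21_iff, ← insert_erase hv] at hG
  refine hcontr.isTightOn_expanded hG (isNClique_vertexToK4Edges hk hedges).card_eq.le ?_
  exact fun T hT w hw ↦ (degreeInto_mono hT.subset).trans
    (hcontr.degreeInto_le_one w (mem_sdiff.2 ⟨hw, notMem_empty w⟩))

theorem mem_vertexSplitEdges_left (hv₀ : v₀ ∉ G.verts) (hv₁ : v₁ ∉ G.verts) (hv : v₀ ≠ v₁)
    (hvu : s(v, u) ∈ G.edges) (hw : w ∈ G.verts) :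
    s(w, v₀) ∈ vertexSplitEdges G v u v₀ v₁ σ ↔ s(v, w) ∈ G.edges ∧ (w = u ∨ σ w = false) := by
  have hl := @mem_verts_left G
  have hr := @mem_verts_right G
  rw [mem_vertexSplitEdges]
  simp only [Sym2.eq_iff]
  grind

theorem mem_vertexSplitEdges_right (hv₀ : v₀ ∉ G.verts) (hv₁ : v₁ ∉ G.verts) (hv : v₀ ≠ v₁)
    (hvu : s(v, u) ∈ G.edges) (hw : w ∈ G.verts) :
    s(w, v₁) ∈ vertexSplitEdges G v u v₀ v₁ σ ↔ s(v, w) ∈ G.edges ∧ (w = u ∨ σ w = true) := by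
  have hl := @mem_verts_left G
  have hr := @mem_verts_right G
  rw [mem_vertexSplitEdges]
  simp only [Sym2.eq_iff]
  grind

theorem mem_vertexSplitEdges_of_mem (hv₀ : v₀ ∉ G.verts) (hv₁ : v₁ ∉ G.verts)
    (hp : p ∈ G.verts.erase v) (hq : q ∈ G.verts.erase v) :
    s(p, q) ∈ vertexSplitEdges G v u v₀ v₁ σ ↔ s(p, q) ∈ G.edges := by
  rw [mem_vertexSplitEdges]
  simp only [Sym2.eq_iff]
  rw [mem_erase] at hp hq
  have hpσ : p ≠ if σ q then v₁ else v₀ := by grind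
  have hqσ : q ≠ if σ p then v₁ else v₀ := by grind
  grind

theorem isContraction_vertexSplitEdges (hv₀ : v₀ ∉ G.verts) (hv₁ : v₁ ∉ G.verts) (hne : v₀ ≠ v₁)
    (hvu : s(v, u) ∈ G.edges) (hedges : G'.edges = vertexSplitEdges G v u v₀ v₁ σ) :
    IsContraction G'.toSimpleGraph G.toSimpleGraph (G.verts.erase v) {v₀, v₁} {u} v := by
  have hpair : G'.toSimpleGraph.Adj v₀ v₁ := by
    rw [toSimpleGraph_adj, hedges, mem_vertexSplitEdges]
    exact Or.inr (Or.inl (Or.inl rfl))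
  have hleft {w} (hw : w ∈ G.verts.erase v) :
      G'.toSimpleGraph.Adj w v₀ ↔ s(v, w) ∈ G.edges ∧ (w = u ∨ σ w = false) := by
    rw [toSimpleGraph_adj, hedges,
      mem_vertexSplitEdges_left hv₀ hv₁ hne hvu (mem_of_mem_erase hw)]
  have hright {w} (hw : w ∈ G.verts.erase v) :
      G'.toSimpleGraph.Adj w v₁ ↔ s(v, w) ∈ G.edges ∧ (w = u ∨ σ w = true) := by
    rw [toSimpleGraph_adj, hedges,
      mem_vertexSplitEdges_right hv₀ hv₁ hne hvu (mem_of_mem_erase hw)]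
  have hu : u ∈ G.verts.erase v := mem_erase.2 ⟨(ne_of_mem_edges hvu).symm, mem_verts_right hvu⟩
  refine ⟨notMem_erase v _, ?_, singleton_subset_iff.2 hu, fun a ha b hb ↦ ?_,
    fun w hw ↦ ?_, fun w hw ↦ ?_, fun w hw ↦ ?_, ?_⟩
  · simp [disjoint_right, hv₀, hv₁]
  · rw [toSimpleGraph_adj, toSimpleGraph_adj, hedges, mem_vertexSplitEdges_of_mem hv₀ hv₁ ha hb]
  · rw [SimpleGraph.adj_comm, toSimpleGraph_adj]
    simp only [mem_insert, mem_singleton, exists_eq_or_imp, exists_eq_left, hleft hw, hright hw]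
    have := Bool.eq_false_or_eq_true (σ w)
    tauto
  · rw [mem_singleton.1 hw, degreeInto_pair hne, if_pos ((hleft hu).2 ⟨hvu, Or.inl rfl⟩),
      if_pos ((hright hu).2 ⟨hvu, Or.inl rfl⟩)]
  · rw [mem_sdiff, mem_singleton] at hw
    rw [degreeInto_pair hne, if_congr (hleft hw.1) rfl rfl, if_congr (hright hw.1) rfl rfl]
    grind
  · rw [edgeCount_pair hpair, card_pair hne, card_singleton]

theorem VertexSplit.tight21 (h : VertexSplit G G') (hG : Tight21 G) : Tight21 G' := by
  obtain ⟨v, u, v₀, v₁, σ, hv, hvu, hv₀, hv₁, hne, hverts, hedges⟩ := h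
  have hV : G'.verts = G.verts.erase v ∪ {v₀, v₁} := by rw [hverts]; grind
  rw [tight21_iff, hV]
  rw [tight21_iff, ← insert_erase hv] at hG
  refine (isContraction_vertexSplitEdges hv₀ hv₁ hne hvu hedges).isTightOn_expanded hG
    (card_le_two.trans (by norm_num)) fun T hT w _ ↦ ?_
  have hcard := card_lt_card hT
  rw [card_pair hne] at hcard
  exact degreeInto_le_card.trans (by omega)

theorem tight21_of_card_le_six (hcard : #G.verts ≤ 6) (hsize : #G.edges + 1 = 2 * #G.verts)
    (hdeg : ∀ v ∈ G.verts, ∃ x y, x ≠ y ∧ s(v, x) ∈ G.edges ∧ s(v, y) ∈ G.edges) :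
    Tight21 G := by
  have htight : IsTightSet G.toSimpleGraph G.verts := by rwa [IsTightSet, edgeCount_verts]
  rw [tight21_iff]
  refine ⟨.of_card_le_six hcard (by rw [edgeCount_verts]; omega) fun v hv ↦ ?_, htight⟩
  obtain ⟨x, y, hxy, hvx, hvy⟩ := hdeg v hv
  exact two_le_degreeInto hxy (mem_verts_right hvx) (mem_verts_right hvy) hvx hvy

theorem card_edges_k5MinusE {a b c d e : ℕ} (h : [a, b, c, d, e].Nodup) :
    #({s(a, c), s(a, d), s(a, e), s(b, c), s(b, d), s(b, e), s(c, d), s(c, e), s(d, e)} :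
      Finset (Sym2 ℕ)) = 9 := by
  simp only [List.nodup_cons, List.mem_cons, List.not_mem_nil, or_false, not_or] at h
  repeat rw [card_insert_of_notMem]
  · rfl
  all_goals
    simp only [mem_insert, mem_singleton, Sym2.eq_iff]
    grind only

theorem card_edges_k4JoinK4 {a b c d e f : ℕ} (h : [a, b, c, d, e, f].Nodup) :
    #({s(a, b), s(a, c), s(a, d), s(b, c), s(b, d), s(c, d), s(a, e), s(a, f), s(b, e), s(b, f),
      s(e, f)} : Finset (Sym2 ℕ)) = 11 := by
  simp only [List.nodup_cons, List.mem_cons, List.not_mem_nil, or_false, not_or] at h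
  repeat rw [card_insert_of_notMem]
  · rfl
  all_goals
    simp only [mem_insert, mem_singleton, Sym2.eq_iff]
    grind only

theorem IsK5MinusE.tight21 (h : IsK5MinusE G) : Tight21 G := by
  obtain ⟨a, b, c, d, e, hab, hac, had, hae, hbc, hbd, hbe, hcd, hce, hde, hverts, hedges⟩ := h
  have hcard : #G.verts = 5 := by
    rw [hverts]
    simp [hab, hac, had, hae, hbc, hbd, hbe, hcd, hce, hde]
  have hsize : #G.edges = 9 := by
    rw [hedges, card_edges_k5MinusE (by simp [*])]
  refine tight21_of_card_le_six (by omega) (by omega) ?_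
  simp only [hverts, hedges, mem_insert, mem_singleton, forall_eq_or_imp, forall_eq]
  exact ⟨⟨c, d, by simp [*]⟩, ⟨c, d, by simp [*]⟩, ⟨a, b, by simp [*]⟩, ⟨a, b, by simp [*]⟩,
    ⟨a, b, by simp [*]⟩⟩

theorem IsK4JoinK4.tight21 (h : IsK4JoinK4 G) : Tight21 G := by
  obtain ⟨a, b, c, d, e, f, hab, hac, had, hae, haf, hbc, hbd, hbe, hbf, hcd, hce, hcf, hde, hdf,
    hef, hverts, hedges⟩ := h
  have hcard : #G.verts = 6 := by
    rw [hverts]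
    simp [hab, hac, had, hae, haf, hbc, hbd, hbe, hbf, hcd, hce, hcf, hde, hdf, hef]
  have hsize : #G.edges = 11 := by
    rw [hedges, card_edges_k4JoinK4 (by simp [*])]
  refine tight21_of_card_le_six (by omega) (by omega) ?_
  simp only [hverts, hedges, mem_insert, mem_singleton, forall_eq_or_imp, forall_eq]
  exact ⟨⟨c, d, by simp [*]⟩, ⟨c, d, by simp [*]⟩, ⟨a, b, by simp [*]⟩, ⟨a, b, by simp [*]⟩,
    ⟨a, b, by simp [*]⟩, ⟨a, b, by simp [*]⟩⟩

theorem NOClass21.tight21 (h : NOClass21 G) : Tight21 G := by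
  induction h with
  | k5e G h => exact h.tight21
  | k4k4 G h => exact h.tight21
  | va G G' _ h ih => exact h.tight21 ih
  | es G G' _ h ih => exact h.tight21 ih
  | vk4 G G' _ h ih => exact h.tight21 ih
  | vs G G' _ h ih => exact h.tight21 ih
  | join G₁ G₂ G' _ _ h ih₁ ih₂ => exact h.tight21 ih₁ ih₂

end MovesPreserveTightness

section InverseMoves

open FinGraph

variable {G : FinGraph} {v w x y : ℕ}

/-- `G` arises by `move` from a smaller tight graph. -/
def ReducesBy (move : FinGraph → FinGraph → Prop) (G : FinGraph) : Prop :=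
  ∃ H, move H G ∧ Tight21 H ∧ #H.verts < #G.verts

namespace FinGraph

theorem edges_ext {E : Finset (Sym2 ℕ)} (h : ∀ a b, s(a, b) ∈ G.edges ↔ s(a, b) ∈ E) :
    G.edges = E :=
  Finset.ext (Sym2.forall.2 h)

theorem mem_filter_adj : w ∈ G.verts.filter (G.toSimpleGraph.Adj v) ↔ s(v, w) ∈ G.edges :=
  mem_filter.trans (and_iff_right_of_imp mem_verts_right)

theorem mem_verts_erase (h : s(v, w) ∈ G.edges) : w ∈ G.verts.erase v :=
  mem_erase.2 ⟨(ne_of_mem_edges h).symm, mem_verts_right h⟩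

end FinGraph

theorem reducesBy_vertexAddition (hG : Tight21 G) (hv : v ∈ G.verts)
    (hdeg : degreeInto G.toSimpleGraph v G.verts = 2) : ReducesBy VertexAddition G := by
  obtain ⟨a, b, hab, hnbrs⟩ := card_eq_two.1 hdeg
  have hadj : ∀ w, s(v, w) ∈ G.edges ↔ w = a ∨ w = b := fun w ↦ by
    rw [← mem_filter_adj, hnbrs, mem_insert, mem_singleton]
  refine ⟨ofSimpleGraph G.toSimpleGraph (G.verts.erase v),
    ⟨v, a, b, notMem_erase v _, mem_verts_erase ((hadj a).2 (.inl rfl)),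
      mem_verts_erase ((hadj b).2 (.inr rfl)), hab, (insert_erase hv).symm,
      edges_ext fun p q ↦ ?_⟩, tight21_ofSimpleGraph ?_, card_erase_lt_of_mem hv⟩
  · have hl := @mem_verts_left G p q
    have hr := @mem_verts_right G p q
    have : s(p, v) = s(v, p) := Sym2.eq_swap
    simp only [mem_insert, mem_edges_ofSimpleGraph, toSimpleGraph_adj, mem_erase, Sym2.eq_iff]
    grind
  · rwa [← isTightOn_insert_iff (notMem_erase v _) (by rwa [degreeInto_erase_self]),
      insert_erase hv, ← tight21_iff]

theorem reducesBy_edgeSplit_of_not_adj (hG : Tight21 G) (hv : v ∈ G.verts)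
    (hdeg : degreeInto G.toSimpleGraph v G.verts = 3) (hvx : s(v, x) ∈ G.edges)
    (hvy : s(v, y) ∈ G.edges) (hxy : x ≠ y) (hadj : s(x, y) ∉ G.edges)
    (hblock : ∀ T ⊆ G.verts.erase v, x ∈ T → y ∈ T → ¬IsTightSet G.toSimpleGraph T) :
    ReducesBy EdgeSplit G := by
  obtain ⟨z, hz⟩ : ∃ z, ((G.verts.filter (G.toSimpleGraph.Adj v)).erase x).erase y = {z} := by
    rw [← card_eq_one, card_erase_of_mem (mem_erase.2 ⟨hxy.symm, mem_filter_adj.2 hvy⟩),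
      card_erase_of_mem (mem_filter_adj.2 hvx)]
    exact congrArg (· - 1 - 1) hdeg
  have hz' : ∀ w, (w ≠ y ∧ w ≠ x ∧ s(v, w) ∈ G.edges) ↔ w = z := fun w ↦ by
    rw [← mem_filter_adj, ← mem_erase, ← mem_erase, hz, mem_singleton]
  obtain ⟨hzy, hzx, hvz⟩ := (hz' z).2 rfl
  have hx := mem_verts_erase hvx
  have hy := mem_verts_erase hvy
  refine ⟨ofSimpleGraph (G.toSimpleGraph ⊔ SimpleGraph.edge x y) (G.verts.erase v),
    ⟨v, x, y, z, notMem_erase v _, hx, hy, mem_verts_erase hvz, hzx, hzy,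
      mem_edges_ofSimpleGraph.2 ⟨.inr ((SimpleGraph.edge_adj ..).2 ⟨.inl ⟨rfl, rfl⟩, hxy⟩), hx, hy⟩,
      (insert_erase hv).symm, edges_ext fun p q ↦ ?_⟩,
    tight21_ofSimpleGraph (isTightOn_sup_edge_of_insert ?_ (notMem_erase v _)
      (by rwa [degreeInto_erase_self]) hx hy hxy hadj hblock), card_erase_lt_of_mem hv⟩
  · have hl := @mem_verts_left G p q
    have hr := @mem_verts_right G p q
    have : s(p, v) = s(v, p) := Sym2.eq_swap
    have hswap' : s(y, x) = s(x, y) := Sym2.eq_swap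
    simp only [mem_insert, mem_edges_ofSimpleGraph, toSimpleGraph_adj, mem_erase, Sym2.eq_iff,
      SimpleGraph.sup_adj, SimpleGraph.edge_adj, ne_eq]
    grind
  · rwa [insert_erase hv, ← tight21_iff]

theorem mem_edges_of_not_reducesBy_edgeSplit (hG : Tight21 G) (hv : v ∈ G.verts)
    (hdeg : degreeInto G.toSimpleGraph v G.verts = 3) (hvx : s(v, x) ∈ G.edges)
    (hvy : s(v, y) ∈ G.edges) (hxy : x ≠ y) (hred : ¬ReducesBy EdgeSplit G) :
    s(x, y) ∈ G.edges := by
  have hsparse := (tight21_iff.1 hG).isSparseOn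
  rw [← insert_erase hv] at hsparse
  refine hsparse.adj_of_forall_isTightSet (notMem_erase v _) (by rwa [degreeInto_erase_self])
    (fun a _ b _ hva hvb hab hadj ↦ ?_) (mem_verts_erase hvx) (mem_verts_erase hvy) hvx hvy hxy
  by_contra! hblock
  exact hred (reducesBy_edgeSplit_of_not_adj hG hv hdeg hva hvb hab hadj hblock)

theorem exists_edgeJoin (hG : Tight21 G) {M : Finset ℕ} (hM : M ⊂ G.verts)
    (htight : IsTightSet G.toSimpleGraph M)
    (hcross : #(G.toSimpleGraph.interedges M (G.verts \ M)) < 2) :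
    ∃ G₁ G₂, EdgeJoin G₁ G₂ G ∧ Tight21 G₁ ∧ Tight21 G₂ ∧ #G₁.verts < #G.verts ∧
      #G₂.verts < #G.verts := by
  have hunion : M ∪ (G.verts \ M) = G.verts := union_sdiff_of_subset hM.subset
  have hG' := tight21_iff.1 hG
  have hsparse := hG'.isSparseOn.mono hM.subset
  rw [← hunion] at hG'
  obtain ⟨hone, hright⟩ := hG'.isTightOn_right_of_union disjoint_sdiff htight
    (sdiff_nonempty.2 hM.not_subset) hcross
  obtain ⟨⟨a, b⟩, hab⟩ := card_eq_one.1 hone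
  have hcross_iff : ∀ p q, (p ∈ M ∧ q ∈ G.verts \ M ∧ s(p, q) ∈ G.edges) ↔ p = a ∧ q = b :=
    fun p q ↦ by rw [← Prod.mk_inj, ← mem_singleton, ← hab, SimpleGraph.mk_mem_interedges_iff,
      toSimpleGraph_adj]
  obtain ⟨ha, hb, hadj⟩ := (hcross_iff a b).2 ⟨rfl, rfl⟩
  refine ⟨ofSimpleGraph G.toSimpleGraph M, ofSimpleGraph G.toSimpleGraph (G.verts \ M),
    ⟨a, b, disjoint_sdiff, ha, hb, hunion.symm, edges_ext fun p q ↦ ?_⟩,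
    tight21_ofSimpleGraph ⟨hsparse, htight⟩, tight21_ofSimpleGraph hright, card_lt_card hM,
    card_lt_card (sdiff_ssubset hM.subset htight.nonempty)⟩
  have hl := @mem_verts_left G p q
  have hr := @mem_verts_right G p q
  have hpq := hcross_iff p q
  have hqp := hcross_iff q p
  have hswap : s(q, p) = s(p, q) := Sym2.eq_swap
  simp only [mem_insert, mem_union, mem_edges_ofSimpleGraph, toSimpleGraph_adj, Sym2.eq_iff]
  rw [mem_sdiff] at *
  grind

end InverseMoves

section ContractionMoves

open FinGraph

variable {G : FinGraph} {v w p q r : ℕ} {F K U : Finset ℕ} {k : Fin 4 → ℕ} {f : ℕ → Fin 4}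

namespace FinGraph

/-- The graph obtained from `G` by contracting `F` to a new vertex `v`. -/
noncomputable def contract (G : FinGraph) (F : Finset ℕ) (v : ℕ) : FinGraph :=
  ofSimpleGraph (contractTo G.toSimpleGraph F v) (insert v (G.verts \ F))

theorem contract_verts : (contract G F v).verts = insert v (G.verts \ F) :=
  rfl

theorem card_contract_verts_lt (hF : F ⊆ G.verts) (hcard : 2 ≤ #F) :
    #(contract G F v).verts < #G.verts := by
  have := card_insert_le v (G.verts \ F)
  have := card_sdiff_add_card_eq_card hF
  rw [contract_verts]
  omega

theorem mem_edges_contract_of_ne (hp : p ≠ v) (hq : q ≠ v) :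
    s(p, q) ∈ (contract G F v).edges ↔ s(p, q) ∈ G.edges ∧ p ∉ F ∧ q ∉ F := by
  have hl := @mem_verts_left G p q
  have hr := @mem_verts_right G p q
  have hadj := fun hpF hqF ↦ contractTo_adj_of_notMem (G := G.toSimpleGraph) (F := F) hpF hqF hp hq
  simp only [toSimpleGraph_adj] at hadj
  rw [contract, mem_edges_ofSimpleGraph, mem_insert, mem_insert, mem_sdiff, mem_sdiff]
  grind

theorem mem_edges_contract_new (hv : v ∉ G.verts) :
    s(v, w) ∈ (contract G F v).edges ↔ w ∉ F ∧ ∃ x ∈ F, s(w, x) ∈ G.edges := by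
  have hnew : ∀ u, ¬G.toSimpleGraph.Adj u v := fun _ h ↦ hv (mem_verts_right h)
  rw [contract, mem_edges_ofSimpleGraph, mem_insert, mem_insert, SimpleGraph.adj_comm]
  constructor
  · rintro ⟨hadj, -, hw⟩
    have hwF := (mem_sdiff.1 (hw.resolve_left hadj.ne)).2
    exact ⟨hwF, (contractTo_adj_right hnew hwF hadj.ne).1 hadj⟩
  · rintro ⟨hwF, x, hx, hwx⟩
    have hw := mem_verts_left hwx
    exact ⟨(contractTo_adj_right hnew hwF (ne_of_mem_of_not_mem hw hv)).2 ⟨x, hx, hwx⟩, .inl rfl,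
      .inr (mem_sdiff.2 ⟨hw, hwF⟩)⟩

theorem mem_edges_iff_contract (hv : v ∉ G.verts) : s(p, q) ∈ G.edges ↔
    (s(p, q) ∈ (contract G F v).edges ∧ p ≠ v ∧ q ≠ v) ∨ (s(p, q) ∈ G.edges ∧ p ∈ F ∧ q ∈ F) ∨
      (p ∉ F ∧ s(p, q) ∈ G.edges ∧ q ∈ F) ∨ (q ∉ F ∧ s(q, p) ∈ G.edges ∧ p ∈ F) := by
  have hpv : s(p, q) ∈ G.edges → p ≠ v := fun h ↦ ne_of_mem_of_not_mem (mem_verts_left h) hv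
  have hqv : s(p, q) ∈ G.edges → q ≠ v := fun h ↦ ne_of_mem_of_not_mem (mem_verts_right h) hv
  have hpq := @mem_edges_contract_of_ne G v p q F
  have hswap : s(q, p) = s(p, q) := Sym2.eq_swap
  grind only

end FinGraph

theorem edges_eq_vertexToK4Edges (hv : v ∉ G.verts) (hk : k.Injective) (hK : univ.image k = K)
    (hclique : G.toSimpleGraph.IsClique K) (hf : ∀ w ∉ K, ∀ i, s(w, k i) ∈ G.edges → i = f w) :
    G.edges = vertexToK4Edges (contract G K v) v k f := by
  have hkK : ∀ x, x ∈ K ↔ ∃ i, k i = x := fun x ↦ by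
    rw [← hK, mem_image_univ_iff_mem_range, Set.mem_range]
  have hK' : ∀ p q, (∃ i j, i ≠ j ∧ p = k i ∧ q = k j) ↔ p ∈ K ∧ q ∈ K ∧ p ≠ q := fun p q ↦ by
    rw [hkK, hkK]
    grind [Function.Injective]
  have hattach : ∀ w ∉ K, ∀ x, s(w, x) ∈ G.edges ∧ x ∈ K ↔
      (∃ y ∈ K, s(w, y) ∈ G.edges) ∧ x = k (f w) := fun w hw x ↦ by
    simp only [hkK]
    grind
  refine edges_ext fun p q ↦ ?_
  rw [mem_vertexToK4Edges, mem_edges_contract_new hv, mem_edges_contract_new hv, hK',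
    mem_edges_iff_contract hv, and_assoc, and_assoc]
  refine or_congr_right (or_congr ⟨fun ⟨h, hp, hq⟩ ↦ ⟨hp, hq, ne_of_mem_edges h⟩,
    fun ⟨hp, hq, h⟩ ↦ ⟨hclique hp hq h, hp, hq⟩⟩ (or_congr ?_ ?_))
  · exact and_congr_right fun hp ↦ hattach p hp q
  · exact and_congr_right fun hq ↦ hattach q hq p

theorem vertexToK4_contract (hv : v ∉ G.verts) (hKG : K ⊆ G.verts)
    (hclique : G.toSimpleGraph.IsNClique 4 K)
    (hdeg : ∀ w ∈ G.verts \ K, degreeInto G.toSimpleGraph w K ≤ 1) :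
    VertexToK4 (contract G K v) G := by
  let k := K.orderEmbOfFin hclique.card_eq
  have hkK : univ.image k = K := image_orderEmbOfFin_univ K hclique.card_eq
  have hmem : ∀ i, k i ∈ K := orderEmbOfFin_mem K hclique.card_eq
  have hf : ∀ w, ∃ i, ∀ j, w ∉ K → s(w, k j) ∈ G.edges → j = i := by
    intro w
    by_cases h : ∃ i, w ∉ K ∧ s(w, k i) ∈ G.edges
    · obtain ⟨i, hwK, hwi⟩ := h
      have hone := card_le_one.1 (hdeg w (mem_sdiff.2 ⟨mem_verts_left hwi, hwK⟩))
      exact ⟨i, fun j _ hwj ↦ k.injective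
        (hone _ (mem_filter.2 ⟨hmem j, hwj⟩) _ (mem_filter.2 ⟨hmem i, hwi⟩))⟩
    · exact ⟨0, fun j hwK hwj ↦ absurd ⟨j, hwK, hwj⟩ h⟩
  choose f hf using hf
  refine ⟨v, k, f, mem_insert_self _ _, k.injective, fun i ↦ ?_, ?_,
    edges_eq_vertexToK4Edges hv k.injective hkK hclique.isClique fun w hw i ↦ hf w i hw⟩
  · rw [contract_verts, mem_insert, mem_sdiff, not_or, not_and_not_right]
    exact ⟨ne_of_mem_of_not_mem (hKG (hmem i)) hv, fun _ ↦ hmem i⟩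
  · rw [contract_verts, erase_insert fun h ↦ hv (mem_sdiff.1 h).1, ← image_fin_four, hkK,
      sdiff_union_of_subset hKG]

theorem tight21_contract (hG : Tight21 G) (hv : v ∉ G.verts) (hF : F ⊆ G.verts)
    (hUR : U ⊆ G.verts \ F) (hU : ∀ w ∈ U, degreeInto G.toSimpleGraph w F = 2)
    (hRU : ∀ w ∈ (G.verts \ F) \ U, degreeInto G.toSimpleGraph w F ≤ 1)
    (hcount : edgeCount G.toSimpleGraph F + #U + 2 = 2 * #F)
    (hlt : ∀ T ⊆ G.verts, F ⊆ T → edgeCount G.toSimpleGraph T + #(U \ T) < 2 * #T) :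
    Tight21 (contract G F v) := by
  classical
  have hunion : G.verts \ F ∪ F = G.verts := sdiff_union_of_subset hF
  have hcontr : IsContraction G.toSimpleGraph (contractTo G.toSimpleGraph F v) (G.verts \ F) F
      U v :=
    isContraction_contractTo (fun _ h ↦ hv (mem_verts_right h)) (fun h ↦ hv (mem_sdiff.1 h).1)
      sdiff_disjoint hUR hU hRU hcount
  refine tight21_ofSimpleGraph (hcontr.isTightOn_contracted ?_ fun S hS ↦ ?_)
  · rwa [hunion, ← tight21_iff]
  · have hUF : U \ S = U \ (S ∪ F) := by
      ext w
      have := @hUR w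
      grind
    rw [hUF]
    exact hlt _ (hunion ▸ union_subset_union_left hS) subset_union_right

theorem reducesBy_vertexToK4 (hG : Tight21 G) (hKG : K ⊆ G.verts)
    (hclique : G.toSimpleGraph.IsNClique 4 K)
    (hdeg : ∀ w ∈ G.verts \ K, degreeInto G.toSimpleGraph w K ≤ 1) :
    ReducesBy VertexToK4 G := by
  obtain ⟨v, hv⟩ := Infinite.exists_notMem_finset G.verts
  have hcard := hclique.card_eq
  have hedges := edgeCount_of_isNClique_four hclique
  refine ⟨contract G K v, vertexToK4_contract hv hKG hclique hdeg,
    tight21_contract (U := ∅) hG hv hKG (empty_subset _) (by simp) (by rwa [sdiff_empty])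
      (by rw [hedges, hcard, card_empty]) fun T hT hKT ↦ ?_,
    card_contract_verts_lt hKG (by omega)⟩
  rw [empty_sdiff, card_empty, add_zero]
  exact (tight21_iff.1 hG).isSparseOn T hT ((card_pos.1 (by omega)).mono hKT)

theorem edges_eq_vertexSplitEdges (hv : v ∉ G.verts) (hF : {p, q} = F) (hpq : s(p, q) ∈ G.edges)
    (hpr : s(p, r) ∈ G.edges) (hqr : s(q, r) ∈ G.edges)
    (huniq : ∀ x, s(p, x) ∈ G.edges → s(q, x) ∈ G.edges → x = r) :
    G.edges = vertexSplitEdges (contract G F v) v r p q fun w ↦ s(w, q) ∈ G.edges := by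
  have hmem : ∀ x, x ∈ F ↔ x = p ∨ x = q := by simp [← hF]
  have hr : r ∉ F := by
    rw [hmem]
    exact not_or.2 ⟨(ne_of_mem_edges hpr).symm, (ne_of_mem_edges hqr).symm⟩
  have hattach : ∀ w x, w ∉ F ∧ s(w, x) ∈ G.edges ∧ x ∈ F ↔ (w = r ∧ x ∈ F) ∨
      ((w ∉ F ∧ ∃ y ∈ F, s(w, y) ∈ G.edges) ∧ w ≠ r ∧
        x = if decide (s(w, q) ∈ G.edges) then q else p) := fun w x ↦ by
    have hp : s(p, w) = s(w, p) := Sym2.eq_swap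
    have hq : s(q, w) = s(w, q) := Sym2.eq_swap
    have := huniq w
    simp only [hmem] at hr ⊢
    grind
  have hFF : ∀ a b, s(a, b) ∈ G.edges ∧ a ∈ F ∧ b ∈ F ↔ s(a, b) = s(p, q) := fun a b ↦ by
    constructor
    · rintro ⟨hab, ha, hb⟩
      have := ne_of_mem_edges hab
      rw [Sym2.eq_iff]
      grind
    · intro hab
      rw [hab]
      grind [Sym2.eq_iff]
  have hnew : ∀ a b, (s(a, b) = s(r, p) ∨ s(a, b) = s(r, q)) ↔
      (a = r ∧ b ∈ F) ∨ (b = r ∧ a ∈ F) := fun a b ↦ by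
    simp only [hmem, Sym2.eq_iff]
    tauto
  refine edges_ext fun a b ↦ ?_
  rw [mem_edges_iff_contract (F := F) hv, mem_vertexSplitEdges, mem_edges_contract_new hv,
    mem_edges_contract_new hv, hnew, ← hFF, hattach a b, hattach b a]
  grind only

theorem vertexSplit_contract (hv : v ∉ G.verts) (hpq : s(p, q) ∈ G.edges)
    (hpr : s(p, r) ∈ G.edges) (hqr : s(q, r) ∈ G.edges)
    (huniq : ∀ x, s(p, x) ∈ G.edges → s(q, x) ∈ G.edges → x = r) :
    VertexSplit (contract G {p, q} v) G := by
  have hp := mem_verts_left hpq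
  have hq := mem_verts_right hpq
  have hsub : {p, q} ⊆ G.verts := insert_subset hp (singleton_subset_iff.2 hq)
  have hrv : s(v, r) ∈ (contract G {p, q} v).edges := by
    rw [mem_edges_contract_new hv]
    have := ne_of_mem_edges hpr
    have := ne_of_mem_edges hqr
    exact ⟨by grind, p, mem_insert_self _ _, Sym2.eq_swap (a := p) ▸ hpr⟩
  have hnew : ∀ x ∈ ({p, q} : Finset ℕ), x ∉ (contract G {p, q} v).verts := fun x hx ↦ by
    rw [contract_verts, mem_insert, mem_sdiff, not_or, not_and_not_right]
    exact ⟨ne_of_mem_of_not_mem (hsub hx) hv, fun _ ↦ hx⟩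
  refine ⟨v, r, p, q, fun w ↦ s(w, q) ∈ G.edges, mem_insert_self _ _, hrv,
    hnew p (mem_insert_self _ _), hnew q (by simp), ne_of_mem_edges hpq, ?_,
    edges_eq_vertexSplitEdges hv rfl hpq hpr hqr huniq⟩
  rw [contract_verts, erase_insert fun h ↦ hv (mem_sdiff.1 h).1, ← singleton_union q,
    ← insert_union, union_sdiff_of_subset hsub]

theorem reducesBy_vertexSplit (hG : Tight21 G) (hpq : s(p, q) ∈ G.edges)
    (hpr : s(p, r) ∈ G.edges) (hqr : s(q, r) ∈ G.edges)
    (huniq : ∀ x, s(p, x) ∈ G.edges → s(q, x) ∈ G.edges → x = r)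
    (hno : ∀ T ⊆ G.verts, p ∈ T → q ∈ T → r ∉ T → ¬IsTightSet G.toSimpleGraph T) :
    ReducesBy VertexSplit G := by
  obtain ⟨v, hv⟩ := Infinite.exists_notMem_finset G.verts
  have hne := ne_of_mem_edges hpq
  have hsub : {p, q} ⊆ G.verts :=
    insert_subset (mem_verts_left hpq) (singleton_subset_iff.2 (mem_verts_right hpq))
  have hcard := card_pair hne
  have hdeg : ∀ w, degreeInto G.toSimpleGraph w {p, q} =
      (if s(p, w) ∈ G.edges then 1 else 0) + if s(q, w) ∈ G.edges then 1 else 0 := fun w ↦ by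
    simp only [degreeInto_pair hne, SimpleGraph.adj_comm _ w, toSimpleGraph_adj]
  have hr : r ∉ ({p, q} : Finset ℕ) := by
    have := ne_of_mem_edges hpr
    have := ne_of_mem_edges hqr
    grind
  refine ⟨contract G {p, q} v, vertexSplit_contract hv hpq hpr hqr huniq,
    tight21_contract (U := {r}) hG hv hsub
      (singleton_subset_iff.2 (mem_sdiff.2 ⟨mem_verts_right hpr, hr⟩))
      (fun w hw ↦ ?_) (fun w hw ↦ ?_) ?_ fun T hT hpqT ↦ ?_,
    card_contract_verts_lt hsub hcard.ge⟩
  · rw [mem_singleton.1 hw, hdeg, if_pos hpr, if_pos hqr]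
  · have := huniq w
    rw [hdeg]
    grind
  · rw [edgeCount_pair hpq, hcard, card_singleton]
  · have hsparse := (tight21_iff.1 hG).isSparseOn T hT ⟨p, hpqT (mem_insert_self _ _)⟩
    by_cases hrT : r ∈ T
    · rwa [sdiff_eq_empty_iff_subset.2 (singleton_subset_iff.2 hrT), card_empty, add_zero]
    · have hnot := hno T hT (hpqT (mem_insert_self _ _)) (hpqT (by simp)) hrT
      rw [IsTightSet] at hnot
      rw [sdiff_eq_self_of_disjoint (disjoint_singleton_left.2 hrT), card_singleton]
      omega

end ContractionMoves

section MinimalCounterexample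

open FinGraph

variable {G : FinGraph} {K L : Finset ℕ}

theorem card_edges_add_two_mul_card_inter (hG : Tight21 G) (hK : #K = 4) (hL : #L = 4)
    (hKL : K ∪ L = G.verts) : #G.edges + 2 * #(K ∩ L) = 15 := by
  have hunion := card_union_add_card_inter K L
  rw [hKL] at hunion
  have := hG.1
  omega

theorem isK5MinusE_of_isNClique (hG : Tight21 G) (hK : G.toSimpleGraph.IsNClique 4 K)
    (hL : G.toSimpleGraph.IsNClique 4 L) (hcard : #(K ∩ L) = 3) (hKL : K ∪ L = G.verts) :
    IsK5MinusE G := by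
  have hedges := card_edges_add_two_mul_card_inter hG hK.card_eq hL.card_eq hKL
  obtain ⟨a, ha⟩ : ∃ a, K \ L = {a} := by
    rw [← card_eq_one, card_sdiff, inter_comm, hcard, hK.card_eq]
  obtain ⟨b, hb⟩ : ∃ b, L \ K = {b} := by
    rw [← card_eq_one, card_sdiff, hcard, hL.card_eq]
  obtain ⟨c, d, e, hcd, hce, hde, hcap⟩ := card_eq_three.1 hcard
  have haL : a ∉ L := (mem_sdiff.1 (ha ▸ mem_singleton_self a)).2
  have hbK : b ∉ K := (mem_sdiff.1 (hb ▸ mem_singleton_self b)).2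
  obtain rfl : K = {a, c, d, e} := by rw [← sdiff_union_inter K L, ha, hcap, singleton_union]
  obtain rfl : L = {b, c, d, e} := by
    rw [← sdiff_union_inter L, inter_comm, hb, hcap, singleton_union]
  simp only [mem_insert, mem_singleton, not_or] at haL hbK
  refine ⟨a, b, c, d, e, haL.1, haL.2.1, haL.2.2.1, haL.2.2.2, hbK.2.1, hbK.2.2.1, hbK.2.2.2,
    hcd, hce, hde, ?_, (eq_of_subset_of_card_le ?_ ?_).symm⟩
  · rw [← hKL]
    grind
  · have hadjK := hK.isClique
    have hadjL := hL.isClique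
    simp only [coe_insert, coe_singleton, SimpleGraph.isClique_insert, Set.mem_insert_iff,
      Set.mem_singleton_iff, forall_eq_or_imp, forall_eq, toSimpleGraph_adj] at hadjK hadjL
    simp only [insert_subset_iff, singleton_subset_iff]
    grind only
  · rw [card_edges_k5MinusE (by simp [haL, hbK, hcd, hce, hde])]
    omega

theorem isK4JoinK4_of_isNClique (hG : Tight21 G) (hK : G.toSimpleGraph.IsNClique 4 K)
    (hL : G.toSimpleGraph.IsNClique 4 L) (hcard : #(K ∩ L) = 2) (hKL : K ∪ L = G.verts) :
    IsK4JoinK4 G := by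
  have hedges := card_edges_add_two_mul_card_inter hG hK.card_eq hL.card_eq hKL
  obtain ⟨c, d, hcd, hcdK⟩ : ∃ c d, c ≠ d ∧ K \ L = {c, d} := by
    rw [← card_eq_two, card_sdiff, inter_comm, hcard, hK.card_eq]
  obtain ⟨e, f, hef, hefL⟩ : ∃ e f, e ≠ f ∧ L \ K = {e, f} := by
    rw [← card_eq_two, card_sdiff, hcard, hL.card_eq]
  obtain ⟨a, b, hab, hcap⟩ := card_eq_two.1 hcard
  have hc : c ∉ L := (mem_sdiff.1 (hcdK ▸ mem_insert_self c {d})).2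
  have hd : d ∉ L := (mem_sdiff.1 (hcdK ▸ mem_insert_of_mem (mem_singleton_self d))).2
  have he : e ∉ K := (mem_sdiff.1 (hefL ▸ mem_insert_self e {f})).2
  have hf : f ∉ K := (mem_sdiff.1 (hefL ▸ mem_insert_of_mem (mem_singleton_self f))).2
  obtain rfl : K = {a, b, c, d} := by
    rw [← sdiff_union_inter K L, union_comm, hcdK, hcap, insert_union, singleton_union]
  obtain rfl : L = {a, b, e, f} := by
    rw [← sdiff_union_inter L, union_comm, inter_comm, hefL, hcap, insert_union, singleton_union]
  simp only [mem_insert, mem_singleton, not_or] at hc hd he hf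
  refine ⟨a, b, c, d, e, f, hab, Ne.symm hc.1, Ne.symm hd.1, Ne.symm he.1, Ne.symm hf.1,
    Ne.symm hc.2.1, Ne.symm hd.2.1, Ne.symm he.2.1, Ne.symm hf.2.1, hcd, hc.2.2.1, hc.2.2.2,
    hd.2.2.1, hd.2.2.2, hef, ?_, (eq_of_subset_of_card_le ?_ ?_).symm⟩
  · rw [← hKL]
    grind
  · have hadjK := hK.isClique
    have hadjL := hL.isClique
    simp only [coe_insert, coe_singleton, SimpleGraph.isClique_insert, Set.mem_insert_iff,
      Set.mem_singleton_iff, forall_eq_or_imp, forall_eq, toSimpleGraph_adj] at hadjK hadjL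
    simp only [insert_subset_iff, singleton_subset_iff]
    grind only
  · rw [card_edges_k4JoinK4 (by simp; grind only)]
    omega

theorem isMoveIrreducible_of_forall_not_reducesBy (hG : Tight21 G)
    (hva : ¬ReducesBy VertexAddition G) (hes : ¬ReducesBy EdgeSplit G)
    (hvk4 : ¬ReducesBy VertexToK4 G) (hvs : ¬ReducesBy VertexSplit G)
    (hjoin : ∀ G₁ G₂, EdgeJoin G₁ G₂ G → Tight21 G₁ → Tight21 G₂ → #G₁.verts < #G.verts →
      ¬#G₂.verts < #G.verts)
    (hK5 : ¬IsK5MinusE G) (hK4 : ¬IsK4JoinK4 G) : IsMoveIrreducible G.toSimpleGraph G.verts where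
  mem_of_adj _ _ := mem_verts_right
  isTightOn := tight21_iff.1 hG
  three_le_degree v hv := by
    have htwo := (tight21_iff.1 hG).two_le_degreeInto hv
    have hne : degreeInto G.toSimpleGraph v G.verts ≠ 2 :=
      fun h ↦ hva (reducesBy_vertexAddition hG hv h)
    omega
  adj_of_degree_eq_three _ hv hdeg _ _ ha hb hab :=
    mem_edges_of_not_reducesBy_edgeSplit hG hv hdeg ha hb hab hes
  exists_two_le_degreeInto K hK hclique := by
    by_contra! h
    exact hvk4 (reducesBy_vertexToK4 hG hK hclique fun w hw ↦
      Nat.le_of_lt_succ (h w (mem_sdiff.1 hw).1 (mem_sdiff.1 hw).2))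
  exists_isTightSet _ _ _ hpq hpr hqr huniq := by
    by_contra! h
    exact hvs (reducesBy_vertexSplit hG hpq hpr hqr huniq h)
  two_le_card_interedges M hM htight := by
    by_contra! h
    obtain ⟨G₁, G₂, hjoin', hG₁, hG₂, hlt₁, hlt₂⟩ := exists_edgeJoin hG hM htight h
    exact hjoin G₁ G₂ hjoin' hG₁ hG₂ hlt₁ hlt₂
  union_ne K _ L _ hK hL htwo hthree hKL := by
    obtain hcard | hcard : #(K ∩ L) = 2 ∨ #(K ∩ L) = 3 := by omega
    · exact hK4 (isK4JoinK4_of_isNClique hG hK hL hcard hKL)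
    · exact hK5 (isK5MinusE_of_isNClique hG hK hL hcard hKL)

theorem Tight21.noClass21 {G : FinGraph} (hG : Tight21 G) : NOClass21 G := by
  induction hn : #G.verts using Nat.strong_induction_on generalizing G with | h n ih => ?_
  subst hn
  by_contra hclass
  refine not_isMoveIrreducible (isMoveIrreducible_of_forall_not_reducesBy hG ?_ ?_ ?_ ?_ ?_
    (hclass <| .k5e G ·) (hclass <| .k4k4 G ·))
  · exact fun ⟨H, hmove, hH, hlt⟩ ↦ hclass (.va H G (ih _ hlt hH rfl) hmove)
  · exact fun ⟨H, hmove, hH, hlt⟩ ↦ hclass (.es H G (ih _ hlt hH rfl) hmove)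
  · exact fun ⟨H, hmove, hH, hlt⟩ ↦ hclass (.vk4 H G (ih _ hlt hH rfl) hmove)
  · exact fun ⟨H, hmove, hH, hlt⟩ ↦ hclass (.vs H G (ih _ hlt hH rfl) hmove)
  · exact fun H₁ H₂ hmove h₁ h₂ hlt₁ hlt₂ ↦
      hclass (.join H₁ H₂ G (ih _ hlt₁ h₁ rfl) (ih _ hlt₂ h₂ rfl) hmove)

end MinimalCounterexample

/-- **Nixon–Owen construction of simple (2,1)-tight graphs.** A simple graph is (2,1)-tight
if and only if it can be generated from `K₅ − e` or `K₄ ⊔ K₄` by vertex addition, edge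
splitting, vertex-to-`K₄`, vertex splitting and edge joining operations. -/
theorem statement_18 (G : FinGraph) : Tight21 G ↔ NOClass21 G :=
  ⟨Tight21.noClass21, NOClass21.tight21⟩
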